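/- arXiv:2206.08546 — 8 statements merged into one kernel-verified Lean document; each statement's English description precedes it below -/
import Mathlib

section
/- Let K be a closed subspace of a Banach space L over ℂ. Then the inclusion morphism K → L is pure if and only if K is an ideal in L. -/
/-!
Write `f : K → L` for the inclusion.

If `f` is pure and `B ⊆ L` is finite-dimensional, purity applied to the inclusions of `B ∩ K` into
`K` and `B`, and of `B` into `L`, gives a contraction `t : B → K` within `δ` of the identity on
`B ∩ K`. With `p : B → B ∩ K` a bounded projection, `t + (1 - t) ∘ p` is exactly the identity
on `B ∩ K` and has norm at most `1 + δ‖p‖`, so a small `δ` suffices. Since `IsPure` only tests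
spaces in `Type`, `B` is first replaced by an isometric copy (`exists_linearIsometryEquiv_type`).

Conversely, given a square `f ∘ u = v ∘ g`, apply the ideal property to the range of `v` to
obtain `t` of norm at most `1 + ε` fixing `K ∩ range v`; then `(1 + ε)⁻¹ • t ∘ v` is a
contraction, and it sends `g a` to `(1 + ε)⁻¹ • u a`.
-/

/-- A morphism of Banach spaces over `ℂ` (a continuous linear map of norm at most `1`)
`f : K → L` is *pure* if for every `ε > 0`, all finite-dimensional Banach spaces
`A` and `B`, and all morphisms `u : A → K`, `g : A → B`, `v : B → L` satisfying
`f ∘ u = v ∘ g`, there exists a morphism `t : B → K` with `‖t ∘ g - u‖ ≤ ε`. -/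
def IsPure {K L : Type*} [NormedAddCommGroup K] [NormedSpace ℂ K]
    [NormedAddCommGroup L] [NormedSpace ℂ L] (f : K →L[ℂ] L) : Prop :=
  ∀ ε : ℝ, 0 < ε →
    ∀ (A B : Type) [NormedAddCommGroup A] [NormedSpace ℂ A] [FiniteDimensional ℂ A]
      [NormedAddCommGroup B] [NormedSpace ℂ B] [FiniteDimensional ℂ B]
      (u : A →L[ℂ] K) (g : A →L[ℂ] B) (v : B →L[ℂ] L),
      ‖u‖ ≤ 1 → ‖g‖ ≤ 1 → ‖v‖ ≤ 1 → f.comp u = v.comp g →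
      ∃ t : B →L[ℂ] K, ‖t‖ ≤ 1 ∧ ‖t.comp g - u‖ ≤ ε

/-- A (closed) subspace `K` of a Banach space `L` is an *ideal* if for every
finite-dimensional subspace `B` of `L` and every `ε > 0` there exists a linear map
`t : B → K` with `‖t‖ ≤ 1 + ε` and `t x = x` for all `x ∈ K ∩ B`. -/
def IsIdeal {L : Type*} [NormedAddCommGroup L] [NormedSpace ℂ L] (K : Submodule ℂ L) : Prop :=
  ∀ (B : Submodule ℂ L), FiniteDimensional ℂ B →
    ∀ ε : ℝ, 0 < ε →
      ∃ t : B →L[ℂ] K, ‖t‖ ≤ 1 + ε ∧ ∀ x : B, (x : L) ∈ K → ((t x : L) = (x : L))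

/-- A finite-dimensional normed space in any universe is isometric to one in `Type`. -/
theorem exists_linearIsometryEquiv_type (E : Type*) [NormedAddCommGroup E] [NormedSpace ℂ E]
    [FiniteDimensional ℂ E] :
    ∃ (B : Type) (_ : NormedAddCommGroup B) (_ : NormedSpace ℂ B), Nonempty (B ≃ₗᵢ[ℂ] E) := by
  -- Forgetting the concrete type `Fin n → ℂ` keeps its sup norm out of the way.
  obtain ⟨B, _, _, ⟨e⟩⟩ : ∃ (B : Type) (_ : AddCommGroup B) (_ : Module ℂ B),
      Nonempty (B ≃ₗ[ℂ] E) :=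
    ⟨Fin (Module.finrank ℂ E) → ℂ, inferInstance, inferInstance,
      ⟨(Module.finBasis ℂ E).equivFun.symm⟩⟩
  let : NormedAddCommGroup B :=
    NormedAddCommGroup.induced B E e.toLinearMap e.injective
  let : NormedSpace ℂ B := NormedSpace.induced ℂ B E e.toLinearMap
  exact ⟨B, inferInstance, inferInstance, ⟨⟨e, fun _ => rfl⟩⟩⟩

theorem IsPure.isIdeal {L : Type*} [NormedAddCommGroup L] [NormedSpace ℂ L]
    {K : Submodule ℂ L} (h : IsPure K.subtypeL) : IsIdeal K := by
  intro B hB ε hε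
  obtain ⟨B₀, _, _, ⟨e⟩⟩ := exists_linearIsometryEquiv_type B
  have : FiniteDimensional ℂ B₀ := e.symm.toLinearEquiv.finiteDimensional
  let v : B₀ →L[ℂ] L := B.subtypeL.comp e.toLinearIsometry.toContinuousLinearMap
  have hv (x : B₀) : ‖v x‖ = ‖x‖ := e.norm_map x
  -- The copy of `B ∩ K` inside `B₀`.
  let A : Submodule ℂ B₀ := K.comap v.toLinearMap
  let u : A →L[ℂ] K := (v.comp A.subtypeL).codRestrict K fun a => a.2
  obtain ⟨p, hp⟩ := Submodule.ClosedComplemented.of_finiteDimensional A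
  have hδ : 0 < ε / (‖p‖ + 1) := by positivity
  obtain ⟨t, ht, htu⟩ := h _ hδ A B₀ u A.subtypeL v
    (ContinuousLinearMap.opNorm_le_bound _ zero_le_one fun a => by
      rw [one_mul]; exact (hv a).le)
    (A.norm_subtypeL_le)
    (ContinuousLinearMap.opNorm_le_bound _ zero_le_one fun a => by
      rw [one_mul]; exact (hv a).le)
    rfl
  let s : B₀ →L[ℂ] K := t - (t.comp A.subtypeL - u).comp p
  have hs : ‖s‖ ≤ 1 + ε := by
    have h1 : ‖(t.comp A.subtypeL - u).comp p‖ ≤ ε := by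
      calc _ ≤ ‖t.comp A.subtypeL - u‖ * ‖p‖ := ContinuousLinearMap.opNorm_comp_le _ _
        _ ≤ ε / (‖p‖ + 1) * (‖p‖ + 1) := by gcongr; linarith
        _ = ε := by field_simp
    exact (norm_sub_le _ _).trans (add_le_add ht h1)
  refine ⟨s.comp e.symm.toLinearIsometry.toContinuousLinearMap, ?_, ?_⟩
  · refine ContinuousLinearMap.opNorm_le_bound _ (by positivity) fun x => ?_
    have := s.le_of_opNorm_le hs (e.symm x)
    rwa [e.symm.norm_map] at this
  · intro x hx
    have hve : v (e.symm x) = x := congrArg Subtype.val (e.apply_symm_apply x)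
    have hmem : e.symm x ∈ A := by
      change v (e.symm x) ∈ K
      rwa [hve]
    have hpx : p (e.symm x) = ⟨e.symm x, hmem⟩ := hp ⟨e.symm x, hmem⟩
    have hsx : s (e.symm x) = u ⟨e.symm x, hmem⟩ := by simp [s, hpx]
    change (s (e.symm x) : L) = x
    rw [hsx]
    exact hve

theorem IsIdeal.isPure {L : Type*} [NormedAddCommGroup L] [NormedSpace ℂ L]
    {K : Submodule ℂ L} (h : IsIdeal K) : IsPure K.subtypeL := by
  intro ε hε A B _ _ _ _ _ _ u g v hu _ hv huv
  obtain ⟨t, ht, htK⟩ := h (LinearMap.range v.toLinearMap) inferInstance ε hε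
  let w : B →L[ℂ] LinearMap.range v.toLinearMap := v.codRestrict _ fun b => ⟨b, rfl⟩
  have hw : ‖w‖ ≤ 1 :=
    ContinuousLinearMap.opNorm_le_bound _ zero_le_one fun b => v.le_of_opNorm_le hv b
  have hc : ‖((1 + ε : ℝ) : ℂ)⁻¹‖ = (1 + ε)⁻¹ := by
    rw [norm_inv, Complex.norm_real, Real.norm_of_nonneg (by positivity)]
  refine ⟨((1 + ε : ℝ) : ℂ)⁻¹ • t.comp w, ?_, ?_⟩
  · rw [norm_smul, hc]
    calc (1 + ε)⁻¹ * ‖t.comp w‖ ≤ (1 + ε)⁻¹ * ((1 + ε) * 1) := by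
          gcongr
          exact (ContinuousLinearMap.opNorm_comp_le _ _).trans (by gcongr)
      _ = 1 := by field_simp
  · have key (a : A) : t (w (g a)) = u a := by
      have hva : v (g a) = u a := (DFunLike.congr_fun huv a).symm
      refine Subtype.ext ((htK (w (g a)) ?_).trans hva)
      change v (g a) ∈ K
      rw [hva]
      exact (u a).2
    have heq : (((1 + ε : ℝ) : ℂ)⁻¹ • t.comp w).comp g - u =
        (((1 + ε : ℝ) : ℂ)⁻¹ - 1) • u := by
      ext a
      simp [key, sub_smul]
    have hn : ‖((1 + ε : ℝ) : ℂ)⁻¹ - 1‖ ≤ ε := by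
      rw [← Complex.ofReal_inv, ← Complex.ofReal_one, ← Complex.ofReal_sub, Complex.norm_real,
        Real.norm_eq_abs, abs_le]
      have h1 : (1 + ε)⁻¹ ≤ 1 := inv_le_one_of_one_le₀ (by linarith)
      have h2 : 1 - ε ≤ (1 + ε)⁻¹ := by
        rw [← one_div, le_div_iff₀ (by positivity)]
        nlinarith
      constructor <;> linarith
    rw [heq, norm_smul]
    calc _ ≤ ε * 1 := by gcongr
      _ = ε := mul_one ε

/-- Let `K` be a closed subspace of a Banach space `L` over `ℂ`. Then the inclusion
morphism `K → L` is pure if and only if `K` is an ideal in `L`. -/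
theorem inclusion_isPure_iff_isIdeal {L : Type*} [NormedAddCommGroup L] [NormedSpace ℂ L]
    [CompleteSpace L] (K : Submodule ℂ L) (hK : IsClosed (K : Set L)) :
    IsPure K.subtypeL ↔ IsIdeal K :=
  ⟨IsPure.isIdeal, IsIdeal.isPure⟩
end

section
/- Every pure morphism f : K → L of Banach spaces is an isometry, i.e. ‖f x‖ = ‖x‖ for all x ∈ K. -/
theorem IsPure.norm_le_of_norm_le_one {K L : Type*} [NormedAddCommGroup K] [NormedSpace ℂ K]
    [NormedAddCommGroup L] [NormedSpace ℂ L] {f : K →L[ℂ] L} (hf : ‖f‖ ≤ 1) (hpure : IsPure f)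
    {x : K} (hx : ‖x‖ ≤ 1) : ‖x‖ ≤ ‖f x‖ := by
  refine le_of_forall_pos_le_add fun ε hε => ?_
  have hfx : ‖f x‖ ≤ 1 := (f.le_of_opNorm_le hf x).trans (by simpa using hx)
  -- If `f x = 0`, then `‖f x‖⁻¹ = 0`, so `g` and `v` below are both zero and the square commutes.
  obtain ⟨t, ht, htu⟩ := hpure ε hε ℂ ℂ
    (ContinuousLinearMap.toSpanSingleton ℂ x)
    (ContinuousLinearMap.toSpanSingleton ℂ (‖f x‖ : ℂ))
    (ContinuousLinearMap.toSpanSingleton ℂ ((‖f x‖ : ℂ)⁻¹ • f x))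
    (by simpa using hx) (by simpa using hfx)
    (by
      rw [ContinuousLinearMap.norm_toSpanSingleton, norm_smul, norm_inv, Complex.norm_real,
        norm_norm]
      exact inv_mul_le_one)
    (by
      ext
      rcases eq_or_ne (f x) 0 with h | h
      · simp [h]
      · have h' : (‖f x‖ : ℂ) ≠ 0 := by simpa using h
        simp [smul_smul, h'])
  have h1 : ‖(‖f x‖ : ℂ) • t 1 - x‖ ≤ ε := by
    have h := ContinuousLinearMap.le_of_opNorm_le _ htu (1 : ℂ)
    rw [← map_smul]
    simpa using h
  have h2 : ‖(‖f x‖ : ℂ) • t 1‖ ≤ ‖f x‖ := by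
    have h : ‖t 1‖ ≤ 1 := by simpa using t.le_of_opNorm_le ht 1
    rw [norm_smul, Complex.norm_real, norm_norm]
    exact mul_le_of_le_one_right (norm_nonneg _) h
  calc ‖x‖ ≤ ‖(‖f x‖ : ℂ) • t 1‖ + ‖(‖f x‖ : ℂ) • t 1 - x‖ := norm_le_norm_add_norm_sub _ _
    _ ≤ ‖f x‖ + ε := add_le_add h2 h1

/-- Every pure morphism `f : K → L` of Banach spaces is an isometry,
i.e. `‖f x‖ = ‖x‖` for all `x ∈ K`. -/
theorem isPure_isometry {K L : Type*}
    [NormedAddCommGroup K] [NormedSpace ℂ K] [CompleteSpace K]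
    [NormedAddCommGroup L] [NormedSpace ℂ L] [CompleteSpace L]
    (f : K →L[ℂ] L) (hf : ‖f‖ ≤ 1) (hpure : IsPure f) :
    ∀ x : K, ‖f x‖ = ‖x‖ := by
  intro x
  refine le_antisymm (by simpa using f.le_of_opNorm_le hf x) ?_
  rcases eq_or_ne x 0 with rfl | hx
  · simp
  have hpos : 0 < ‖x‖ := norm_pos_iff.2 hx
  have key := hpure.norm_le_of_norm_le_one hf (x := (‖x‖ : ℂ)⁻¹ • x)
    (by simp [norm_smul, hpos.ne'])
  rw [map_smul, norm_smul, norm_smul, norm_inv, Complex.norm_real, norm_norm] at key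
  exact le_of_mul_le_mul_left key (inv_pos.2 hpos)
end

section
/- Pure morphisms of Banach spaces are closed under composition: if f₁ : K → L and f₂ : L → M are pure morphisms of Banach spaces, then f₂ ∘ f₁ is pure. -/
/-- Purity applied to a morphism from `A` into a quotient `E ⧸ N`, with all maps out of the quotient
written as maps out of `E` that vanish on `N`. -/
theorem IsPure.exists_of_quotient {K L : Type*} [NormedAddCommGroup K] [NormedSpace ℂ K]
    [NormedAddCommGroup L] [NormedSpace ℂ L] {f : K →L[ℂ] L} (hf : IsPure f)
    {A E : Type} [NormedAddCommGroup A] [NormedSpace ℂ A] [FiniteDimensional ℂ A]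
    [NormedAddCommGroup E] [NormedSpace ℂ E] [FiniteDimensional ℂ E]
    (N : Submodule ℂ E) (u : A →L[ℂ] K) (i : A →L[ℂ] E) (w : E →L[ℂ] L)
    (hu : ‖u‖ ≤ 1) (hi : ‖i‖ ≤ 1) (hw : ‖w‖ ≤ 1) (hN : ∀ x ∈ N, w x = 0)
    (h : f.comp u = w.comp i) {ε : ℝ} (hε : 0 < ε) :
    ∃ s : E →L[ℂ] K, ‖s‖ ≤ 1 ∧ (∀ x ∈ N, s x = 0) ∧ ‖s.comp i - u‖ ≤ ε := by
  have : IsClosed (N : Set E) := N.closed_of_finiteDimensional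
  let q : E →L[ℂ] E ⧸ N := N.mkQ.mkContinuous 1 fun x => by
    simpa using Submodule.Quotient.norm_mk_le N x
  have hq : ‖q‖ ≤ 1 := LinearMap.mkContinuous_norm_le _ zero_le_one _
  let w' : E ⧸ N →L[ℂ] L := (N.liftQ (w : E →ₗ[ℂ] L) hN).mkContinuous 1 fun x => by
    refine le_of_forall_pos_le_add fun η hη => ?_
    obtain ⟨m, rfl, hm⟩ := Submodule.Quotient.norm_mk_lt x hη
    have h1 : ‖w m‖ ≤ ‖m‖ := by simpa using w.le_of_opNorm_le hw m
    rw [one_mul]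
    exact h1.trans hm.le
  have hw' : ‖w'‖ ≤ 1 := LinearMap.mkContinuous_norm_le _ zero_le_one _
  obtain ⟨s, hs, hsu⟩ := hf ε hε A (E ⧸ N) u (q.comp i) w' hu
    ((q.opNorm_comp_le i).trans (mul_le_one₀ hq (norm_nonneg _) hi)) hw' (by
      rw [h]; rfl)
  refine ⟨s.comp q, (s.opNorm_comp_le q).trans (mul_le_one₀ hs (norm_nonneg _) hq),
    fun x hx => ?_, by simpa [ContinuousLinearMap.comp_assoc] using hsu⟩
  have : q x = 0 := (Submodule.Quotient.mk_eq_zero N).2 hx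
  simp [this]

/-- A pure morphism lifts squares that commute up to `δ`, at the cost of `δ` in the conclusion. -/
theorem IsPure.exists_of_norm_sub_le {K L : Type*} [NormedAddCommGroup K] [NormedSpace ℂ K]
    [NormedAddCommGroup L] [NormedSpace ℂ L] {f : K →L[ℂ] L} (hf : IsPure f) (hf₁ : ‖f‖ ≤ 1)
    {A B : Type} [NormedAddCommGroup A] [NormedSpace ℂ A] [FiniteDimensional ℂ A]
    [NormedAddCommGroup B] [NormedSpace ℂ B] [FiniteDimensional ℂ B]
    (u : A →L[ℂ] K) (g : A →L[ℂ] B) (t : B →L[ℂ] L) (hu : ‖u‖ ≤ 1) (ht : ‖t‖ ≤ 1)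
    {δ ε : ℝ} (hδ : 0 < δ) (hε : 0 < ε) (h : ‖t.comp g - f.comp u‖ ≤ δ) :
    ∃ s : B →L[ℂ] K, ‖s‖ ≤ 1 ∧ ‖s.comp g - u‖ ≤ δ + ε := by
  have hδ' : (δ : ℂ) ≠ 0 := by exact_mod_cast hδ.ne'
  let E := WithLp 1 (A × WithLp 1 (B × A))
  let mk : A → B → A → E := fun x b z => WithLp.toLp 1 (x, WithLp.toLp 1 (b, z))
  have hext : ∀ x y : E, x.fst = y.fst → x.snd.fst = y.snd.fst → x.snd.snd = y.snd.snd →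
      x = y := by
    rintro ⟨a, ⟨b, c⟩⟩ ⟨a', ⟨b', c'⟩⟩ h1 h2 h3
    simp_all
  have hmk : ∀ x b z, ‖mk x b z‖ = ‖x‖ + (‖b‖ + ‖z‖) := fun x b z => by
    simp [mk, E, WithLp.prod_norm_eq_of_L1]
  let i : A →L[ℂ] E := LinearMap.mkContinuous
    { toFun := fun x => mk x 0 0
      map_add' := fun x y => by apply hext <;> simp [mk, E]
      map_smul' := fun c x => by apply hext <;> simp [mk, E] } 1 fun x => by simp [hmk]
  let j : B →L[ℂ] E := LinearMap.mkContinuous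
    { toFun := fun b => mk 0 b 0
      map_add' := fun x y => by apply hext <;> simp [mk, E]
      map_smul' := fun c x => by apply hext <;> simp [mk, E] } 1 fun x => by simp [hmk]
  let r : A →ₗ[ℂ] E :=
    { toFun := fun y => mk (-y) (g y) ((δ : ℂ) • y)
      map_add' := fun x y => by apply hext <;> simp [mk, E, add_comm]
      map_smul' := fun c x => by apply hext <;> simp [mk, E, smul_comm c] }
  have hfu : ∀ x, ‖f (u x)‖ ≤ ‖x‖ := fun x => by
    have h1 := f.le_of_opNorm_le hf₁ (u x)
    have h2 := u.le_of_opNorm_le hu x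
    linarith
  have htg : ∀ x, ‖f (u x) - t (g x)‖ ≤ δ * ‖x‖ := fun x => by
    rw [norm_sub_rev]
    exact (t.comp g - f.comp u).le_of_opNorm_le h x
  let w : E →L[ℂ] L := LinearMap.mkContinuous
    { toFun := fun e => f (u e.fst) + (t e.snd.fst +
        (δ : ℂ)⁻¹ • (f (u e.snd.snd) - t (g e.snd.snd)))
      map_add' := fun x y => by simp [E]; module
      map_smul' := fun c x => by simp [E]; module } 1 fun e => by
    have h1 : ‖t e.snd.fst‖ ≤ ‖e.snd.fst‖ := by simpa using t.le_of_opNorm_le ht e.snd.fst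
    have h2 : ‖(δ : ℂ)⁻¹ • (f (u e.snd.snd) - t (g e.snd.snd))‖ ≤ ‖e.snd.snd‖ := by
      rw [norm_smul, norm_inv, Complex.norm_real, Real.norm_of_nonneg hδ.le,
        inv_mul_le_iff₀ hδ]
      exact htg _
    rw [one_mul, WithLp.prod_norm_eq_of_L1, WithLp.prod_norm_eq_of_L1]
    exact (norm_add_le _ _).trans (add_le_add (hfu _) ((norm_add_le _ _).trans (add_le_add h1 h2)))
  have hfin : FiniteDimensional ℂ E := by
    dsimp only [E]; infer_instance
  obtain ⟨s, hs, hsN, hsu⟩ := hf.exists_of_quotient (LinearMap.range r) u i w hu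
    (LinearMap.mkContinuous_norm_le _ zero_le_one _)
    (LinearMap.mkContinuous_norm_le _ zero_le_one _) (by
      rintro _ ⟨y, rfl⟩
      change f (u (-y)) + (t (g y) + (δ : ℂ)⁻¹ • (f (u ((δ : ℂ) • y)) - t (g ((δ : ℂ) • y)))) = 0
      rw [map_smul, map_smul, map_smul, map_smul, ← smul_sub, inv_smul_smul₀ hδ', map_neg, map_neg]
      abel)
    (by ext a; simp [w, i, mk]) hε
  refine ⟨s.comp j, (s.opNorm_comp_le j).trans (mul_le_one₀ hs (norm_nonneg _)
    (LinearMap.mkContinuous_norm_le _ zero_le_one _)), ?_⟩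
  refine ContinuousLinearMap.opNorm_le_bound _ (by positivity) fun a => ?_
  -- The relation `(-a, g a, δ a) = 0` rewrites the difference as the image of `(0, 0, -δ a)`.
  have h1 : s (j (g a)) - s (i a) = - s (mk 0 0 ((δ : ℂ) • a)) := by
    have h2 : r a = j (g a) - i a + mk 0 0 ((δ : ℂ) • a) := by
      apply hext <;> simp [r, i, j, mk, E]
    have h3 := hsN (r a) ⟨a, rfl⟩
    rw [h2, map_add, map_sub] at h3
    exact eq_neg_of_add_eq_zero_left h3
  have h4 : ‖s (j (g a)) - s (i a)‖ ≤ δ * ‖a‖ := by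
    rw [h1, norm_neg]
    have := s.le_of_opNorm_le hs (mk 0 0 ((δ : ℂ) • a))
    simpa [hmk, norm_smul, abs_of_pos hδ] using this
  have h5 : ‖s (i a) - u a‖ ≤ ε * ‖a‖ := (s.comp i - u).le_of_opNorm_le hsu a
  calc ‖s (j (g a)) - u a‖ ≤ ‖s (j (g a)) - s (i a)‖ + ‖s (i a) - u a‖ :=
        norm_sub_le_norm_sub_add_norm_sub _ _ _
    _ ≤ (δ + ε) * ‖a‖ := by linarith

/-- Pure morphisms of Banach spaces are closed under composition. -/
theorem isPure_comp {K L M : Type*}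
    [NormedAddCommGroup K] [NormedSpace ℂ K] [CompleteSpace K]
    [NormedAddCommGroup L] [NormedSpace ℂ L] [CompleteSpace L]
    [NormedAddCommGroup M] [NormedSpace ℂ M] [CompleteSpace M]
    (f₁ : K →L[ℂ] L) (f₂ : L →L[ℂ] M) (hf₁ : ‖f₁‖ ≤ 1) (hf₂ : ‖f₂‖ ≤ 1)
    (h₁ : IsPure f₁) (h₂ : IsPure f₂) :
    IsPure (f₂.comp f₁) := by
  intro ε hε A B _ _ _ _ _ _ u g v hu hg hv huv
  obtain ⟨t, ht, htu⟩ := h₂ (ε / 2) (half_pos hε) A B (f₁.comp u) g v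
    ((f₁.opNorm_comp_le u).trans (mul_le_one₀ hf₁ (norm_nonneg _) hu)) hg hv
    (by rw [← huv, ContinuousLinearMap.comp_assoc])
  obtain ⟨s, hs, hsu⟩ :=
    h₁.exists_of_norm_sub_le hf₁ u g t hu ht (half_pos hε) (half_pos hε) htu
  exact ⟨s, hs, by linarith⟩
end

section
/- A morphism f : K → L of Banach spaces is pure if and only if for every ε > 0, all finite-dimensional Banach spaces A and B, and all morphisms u : A → K, g : A → B, v : B → L with ‖v ∘ g − f ∘ u‖ ≤ ε (an ε-commutative square), there exists a morphism t : B → K with ‖t ∘ g − u‖ ≤ 2ε. -/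
/-!
If the second condition holds, a commutative square is `ε / 2`-commutative, and purity follows.

For the converse, let `A`, `B`, `g : A → B` and `ε > 0` be given. There is a finite-dimensional
*`ε`-pushout* of the identity of `A` along `g`: the universal `P` with morphisms `p : A → P`,
`q : B → P` such that `‖q ∘ g - p‖ ≤ ε` (`exists_eps_pushout`). An `ε`-commutative square `(u, v)`
over `f` therefore yields a morphism `w : P → L` with `w ∘ p = f ∘ u` and `w ∘ q = v`.
Purity applied to the commutative square `f ∘ u = w ∘ p` gives `s : P → K` with
`‖s ∘ p - u‖ ≤ ε`, and `t = s ∘ q` satisfies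
`‖t ∘ g - u‖ ≤ ‖s ∘ (q ∘ g - p)‖ + ‖s ∘ p - u‖ ≤ 2 ε`.

The space `P` is the quotient of the `ℓ¹`-sum `A ⊕ B ⊕ A` by the subspace of all
`(a, -g a, -ε a)`, so that `q (g a) - p a` is the class of `(0, 0, -ε a)`.
-/

/-- Existence of the `ε`-pushout of the identity of `A` along `g`: a finite-dimensional space that
is universal among `ε`-commutative completions of `g`. -/
theorem exists_eps_pushout.{u} {A B : Type}
    [NormedAddCommGroup A] [NormedSpace ℂ A] [FiniteDimensional ℂ A]
    [NormedAddCommGroup B] [NormedSpace ℂ B] [FiniteDimensional ℂ B]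
    (g : A →L[ℂ] B) {ε : ℝ} (hε : 0 < ε) :
    ∃ (P : Type) (_ : NormedAddCommGroup P) (_ : NormedSpace ℂ P) (_ : FiniteDimensional ℂ P)
      (p : A →L[ℂ] P) (q : B →L[ℂ] P), ‖p‖ ≤ 1 ∧ ‖q‖ ≤ 1 ∧ ‖q.comp g - p‖ ≤ ε ∧
      ∀ (L : Type u) [NormedAddCommGroup L] [NormedSpace ℂ L] (h : A →L[ℂ] L) (v : B →L[ℂ] L),
        ‖h‖ ≤ 1 → ‖v‖ ≤ 1 → ‖v.comp g - h‖ ≤ ε →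
        ∃ w : P →L[ℂ] L, ‖w‖ ≤ 1 ∧ w.comp p = h ∧ w.comp q = v := by
  let X := WithLp 1 (A × WithLp 1 (B × A))
  have : FiniteDimensional ℂ (WithLp 1 (B × A)) :=
    (WithLp.linearEquiv 1 ℂ (B × A)).symm.finiteDimensional
  have : FiniteDimensional ℂ X :=
    (WithLp.linearEquiv 1 ℂ (A × WithLp 1 (B × A))).symm.finiteDimensional
  let mk (a : A) (b : B) (c : A) : X := WithLp.toLp 1 (a, WithLp.toLp 1 (b, c))
  have norm_mk (a b c) : ‖mk a b c‖ = ‖a‖ + (‖b‖ + ‖c‖) :=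
    (WithLp.prod_norm_eq_of_L1 _).trans
      (congrArg (‖a‖ + ·) (WithLp.prod_norm_eq_of_L1 (WithLp.toLp 1 (b, c))))
  have mk_add (a b c a' b' c') : mk a b c + mk a' b' c' = mk (a + a') (b + b') (c + c') := rfl
  have mk_smul (r : ℂ) (a b c) : r • mk a b c = mk (r • a) (r • b) (r • c) := rfl
  let S : Submodule ℂ X := LinearMap.range
    ({ toFun := fun a => mk a (-g a) (-((ε : ℂ) • a))
       map_add' := fun a b => by
        rw [mk_add, map_add, smul_add, neg_add, neg_add]
       map_smul' := fun r a => by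
        rw [RingHom.id_apply, mk_smul, map_smul, smul_neg, smul_neg, smul_comm] } : A →ₗ[ℂ] X)
  have hS : IsClosed (S : Set X) := S.closed_of_finiteDimensional
  let p₀ : A →ₗ[ℂ] X :=
    { toFun := fun a => mk a 0 0
      map_add' := fun a b => by simp [mk_add]
      map_smul' := fun r a => by simp [mk_smul] }
  let q₀ : B →ₗ[ℂ] X :=
    { toFun := fun b => mk 0 b 0
      map_add' := fun a b => by simp [mk_add]
      map_smul' := fun r a => by simp [mk_smul] }
  let p : A →L[ℂ] X ⧸ S := (S.mkQ ∘ₗ p₀).toContinuousLinearMap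
  let q : B →L[ℂ] X ⧸ S := (S.mkQ ∘ₗ q₀).toContinuousLinearMap
  have hp (a : A) : p a = S.mkQ (mk a 0 0) := rfl
  have hq (b : B) : q b = S.mkQ (mk 0 b 0) := rfl
  refine ⟨X ⧸ S, inferInstance, inferInstance, inferInstance, p, q, ?_, ?_, ?_, ?_⟩
  · refine p.opNorm_le_bound zero_le_one fun a => ?_
    calc ‖p a‖ ≤ ‖mk a 0 0‖ := Submodule.Quotient.norm_mk_le S _
      _ = 1 * ‖a‖ := by simp [norm_mk]
  · refine q.opNorm_le_bound zero_le_one fun b => ?_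
    calc ‖q b‖ ≤ ‖mk 0 b 0‖ := Submodule.Quotient.norm_mk_le S _
      _ = 1 * ‖b‖ := by simp [norm_mk]
  · refine ContinuousLinearMap.opNorm_le_bound _ hε.le fun a => ?_
    have key : q (g a) - p a = S.mkQ (mk 0 0 (-((ε : ℂ) • a))) := by
      rw [hp, hq, ← map_sub, ← sub_eq_zero, ← map_sub, ← LinearMap.mem_ker, Submodule.ker_mkQ]
      refine ⟨-a, ?_⟩
      change mk (-a) (-g (-a)) (-((ε : ℂ) • -a)) =
        mk (0 - a - 0) (g a - 0 - 0) (0 - 0 - -((ε : ℂ) • a))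
      simp
    calc ‖q (g a) - p a‖ ≤ ‖mk 0 0 (-((ε : ℂ) • a))‖ :=
          key ▸ Submodule.Quotient.norm_mk_le S _
      _ = ε * ‖a‖ := by simp [norm_mk, norm_smul, abs_of_pos hε]
  · intro L _ _ h v hh hv hhv
    let w₀ : X →ₗ[ℂ] L :=
      { toFun := fun x => h x.fst + v x.snd.fst + (ε : ℂ)⁻¹ • (h x.snd.snd - v (g x.snd.snd))
        map_add' := fun x y => by
          change h (x.fst + y.fst) + v (x.snd.fst + y.snd.fst) +
            (ε : ℂ)⁻¹ • (h (x.snd.snd + y.snd.snd) - v (g (x.snd.snd + y.snd.snd))) = _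
          simp only [map_add]; module
        map_smul' := fun r x => by
          change h (r • x.fst) + v (r • x.snd.fst) +
            (ε : ℂ)⁻¹ • (h (r • x.snd.snd) - v (g (r • x.snd.snd))) = _
          simp only [map_smul, RingHom.id_apply]; module }
    have hw₀ (a b c) : w₀ (mk a b c) = h a + v b + (ε : ℂ)⁻¹ • (h c - v (g c)) := rfl
    have hε' : (ε : ℂ) ≠ 0 := by exact_mod_cast hε.ne'
    have hker : S ≤ LinearMap.ker w₀ := by
      rintro _ ⟨a, rfl⟩
      change w₀ (mk a (-g a) (-((ε : ℂ) • a))) = 0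
      have : h (-((ε : ℂ) • a)) - v (g (-((ε : ℂ) • a))) = (ε : ℂ) • (v (g a) - h a) := by
        simp only [map_neg, map_smul]; module
      rw [hw₀, this, inv_smul_smul₀ hε', map_neg]
      abel
    have hnorm (x : X) : ‖w₀ x‖ ≤ ‖x‖ := by
      obtain ⟨a, b, c, rfl⟩ : ∃ a b c, x = mk a b c := ⟨x.fst, x.snd.fst, x.snd.snd, rfl⟩
      have h1 : ‖h a‖ ≤ ‖a‖ := h.le_of_opNorm_le hh a |>.trans_eq (one_mul _)
      have h2 : ‖v b‖ ≤ ‖b‖ := v.le_of_opNorm_le hv b |>.trans_eq (one_mul _)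
      have h3 : ‖(ε : ℂ)⁻¹ • (h c - v (g c))‖ ≤ ‖c‖ := by
        have := (v.comp g - h).le_of_opNorm_le hhv c
        rw [norm_smul, norm_inv, Complex.norm_real, Real.norm_of_nonneg hε.le, norm_sub_rev,
          inv_mul_le_iff₀ hε]
        exact this
      rw [hw₀, norm_mk]
      linarith [norm_add₃_le (a := h a) (b := v b) (c := (ε : ℂ)⁻¹ • (h c - v (g c)))]
    let w : X ⧸ S →L[ℂ] L := (S.liftQ w₀ hker).toContinuousLinearMap
    have hw (x : X) : w (S.mkQ x) = w₀ x := rfl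
    refine ⟨w, w.opNorm_le_bound zero_le_one fun y => ?_, ?_, ?_⟩
    · rw [one_mul]
      refine le_of_forall_pos_le_add fun δ hδ => ?_
      obtain ⟨x, rfl, hx⟩ := Submodule.Quotient.norm_mk_lt y hδ
      exact (hnorm x).trans hx.le
    · ext a
      rw [ContinuousLinearMap.comp_apply, hp, hw, hw₀]
      simp
    · ext b
      rw [ContinuousLinearMap.comp_apply, hq, hw, hw₀]
      simp


/-- A morphism `f : K → L` of Banach spaces is pure if and only if for every `ε > 0`
and every `ε`-commutative square (`‖v ∘ g - f ∘ u‖ ≤ ε`) with finite-dimensional `A`, `B`,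
there exists a morphism `t : B → K` with `‖t ∘ g - u‖ ≤ 2ε`. -/
theorem isPure_iff_eps_commutative {K L : Type*}
    [NormedAddCommGroup K] [NormedSpace ℂ K] [CompleteSpace K]
    [NormedAddCommGroup L] [NormedSpace ℂ L] [CompleteSpace L]
    (f : K →L[ℂ] L) (hf : ‖f‖ ≤ 1) :
    IsPure f ↔
      (∀ ε : ℝ, 0 < ε →
        ∀ (A B : Type) [NormedAddCommGroup A] [NormedSpace ℂ A] [FiniteDimensional ℂ A]
          [NormedAddCommGroup B] [NormedSpace ℂ B] [FiniteDimensional ℂ B]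
          (u : A →L[ℂ] K) (g : A →L[ℂ] B) (v : B →L[ℂ] L),
          ‖u‖ ≤ 1 → ‖g‖ ≤ 1 → ‖v‖ ≤ 1 → ‖v.comp g - f.comp u‖ ≤ ε →
          ∃ t : B →L[ℂ] K, ‖t‖ ≤ 1 ∧ ‖t.comp g - u‖ ≤ 2 * ε) := by
  constructor
  · intro hpure ε hε A B _ _ _ _ _ _ u g v hu hg hv hsq
    obtain ⟨P, _, _, _, p, q, hp, hq, hpq, huniv⟩ := exists_eps_pushout g hε
    have hfu : ‖f.comp u‖ ≤ 1 :=
      (f.opNorm_comp_le u).trans (mul_le_one₀ hf (norm_nonneg _) hu)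
    obtain ⟨w, hw, hwp, -⟩ := huniv L (f.comp u) v hfu hv hsq
    obtain ⟨s, hs, hsp⟩ := hpure ε hε A P u p w hu hp hw hwp.symm
    refine ⟨s.comp q, (s.opNorm_comp_le q).trans (mul_le_one₀ hs (norm_nonneg _) hq), ?_⟩
    have hsplit : (s.comp q).comp g - u = s.comp (q.comp g - p) + (s.comp p - u) := by
      ext a; simp
    calc ‖(s.comp q).comp g - u‖ ≤ ‖s.comp (q.comp g - p)‖ + ‖s.comp p - u‖ :=
          hsplit ▸ norm_add_le _ _
      _ ≤ 1 * ε + ε := by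
          gcongr
          exact (s.opNorm_comp_le _).trans (by gcongr)
      _ = 2 * ε := by ring
  · intro H ε hε A B _ _ _ _ _ _ u g v hu hg hv hsq
    obtain ⟨t, ht, htg⟩ := H (ε / 2) (half_pos hε) A B u g v hu hg hv
      (by rw [hsq, sub_self, norm_zero]; exact (half_pos hε).le)
    exact ⟨t, ht, htg.trans_eq (by ring)⟩
end

section
/- Pure morphisms are preserved by directed unions: let f : K → L be a morphism of Banach spaces, let (I, ≤) be a directed poset, and let (K_i)_{i∈I} and (L_i)_{i∈I} be families of closed subspaces of K and of L respectively, increasing with respect to i, such that the union of the K_i is dense in K, the union of the L_i is dense in L, f maps K_i into L_i for each i, and each restriction f_i : K_i → L_i of f is a pure morphism. Then f is pure. -/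
/-- Contractions `w` on `A` and `v` on `B` with `‖w - v ∘ g‖ ≤ δ` factor through contractions
`p`, `q` into a finite-dimensional space `Q` in which already `‖p - q ∘ g‖ ≤ δ` holds. The space
`Q` is the quotient of the `ℓ¹`-sum `A ⊕ B ⊕ A` by the vectors `(c, -g c, -δ c)`; the third summand
carries `δ⁻¹ (p - q ∘ g)`, whose norm is thereby forced to be at most `1`. The factorization of `v`
is not needed later, so only that of `w` is recorded. -/
theorem exists_almost_pushout {L : Type*} [NormedAddCommGroup L] [NormedSpace ℂ L]
    {A B : Type} [NormedAddCommGroup A] [NormedSpace ℂ A] [FiniteDimensional ℂ A]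
    [NormedAddCommGroup B] [NormedSpace ℂ B] [FiniteDimensional ℂ B]
    (w : A →L[ℂ] L) (g : A →L[ℂ] B) (v : B →L[ℂ] L)
    (hw : ‖w‖ ≤ 1) (hv : ‖v‖ ≤ 1) {δ : ℝ} (hδ : 0 < δ) (hwv : ‖w - v.comp g‖ ≤ δ) :
    ∃ (Q : Type) (_ : NormedAddCommGroup Q) (_ : NormedSpace ℂ Q) (_ : FiniteDimensional ℂ Q)
      (p : A →L[ℂ] Q) (q : B →L[ℂ] Q) (r : Q →L[ℂ] L),
      ‖p‖ ≤ 1 ∧ ‖q‖ ≤ 1 ∧ ‖r‖ ≤ 1 ∧ ‖p - q.comp g‖ ≤ δ ∧ w = r.comp p := by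
  let P := WithLp 1 (A × WithLp 1 (B × A))
  have hδ' : (δ : ℂ) ≠ 0 := by exact_mod_cast hδ.ne'
  let i : A × B × A →ₗ[ℂ] P :=
    { toFun := fun x => WithLp.toLp 1 (x.1, WithLp.toLp 1 (x.2.1, x.2.2))
      map_add' := fun _ _ => rfl
      map_smul' := fun _ _ => rfl }
  have hi (x : A × B × A) : ‖i x‖ = ‖x.1‖ + (‖x.2.1‖ + ‖x.2.2‖) := by
    change ‖(WithLp.toLp 1 (x.1, WithLp.toLp 1 (x.2.1, x.2.2)) : P)‖ = _
    rw [WithLp.prod_norm_eq_of_L1]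
    exact congrArg (‖x.1‖ + ·) (WithLp.prod_norm_eq_of_L1 _)
  let j : P →ₗ[ℂ] A × B × A :=
    { toFun := fun x => (x.fst, x.snd.fst, x.snd.snd)
      map_add' := fun _ _ => rfl
      map_smul' := fun _ _ => rfl }
  have hij (x : P) : i (j x) = x := rfl
  have hji (x : A × B × A) : j (i x) = x := rfl
  have : FiniteDimensional ℂ P :=
    Module.Finite.of_surjective i fun x => ⟨j x, hij x⟩
  let n : A →ₗ[ℂ] P :=
    i.comp (LinearMap.prod LinearMap.id
      (LinearMap.prod (-(g : A →ₗ[ℂ] B)) (-(δ : ℂ) • LinearMap.id)))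
  have hn (c : A) : n c = i (c, -g c, -(δ : ℂ) • c) := rfl
  let N : Submodule ℂ P := LinearMap.range n
  have : IsClosed (N : Set P) := N.closed_of_finiteDimensional
  let R₀ : A × B × A →ₗ[ℂ] L :=
    LinearMap.coprod (w : A →ₗ[ℂ] L) (LinearMap.coprod (v : B →ₗ[ℂ] L)
      ((δ : ℂ)⁻¹ • ((w - v.comp g : A →L[ℂ] L) : A →ₗ[ℂ] L)))
  have hR₀ (x : A × B × A) :
      R₀ x = w x.1 + (v x.2.1 + (δ : ℂ)⁻¹ • (w - v.comp g) x.2.2) := rfl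
  have hR₀le (x : A × B × A) : ‖R₀ x‖ ≤ ‖i x‖ := by
    rw [hR₀, hi]
    refine (norm_add_le _ _).trans <| add_le_add ?_ <| (norm_add_le _ _).trans <| add_le_add ?_ ?_
    · simpa using w.le_of_opNorm_le hw x.1
    · simpa using v.le_of_opNorm_le hv x.2.1
    · rw [norm_smul, norm_inv, Complex.norm_real, Real.norm_of_nonneg hδ.le]
      rw [inv_mul_le_iff₀ hδ]
      exact ContinuousLinearMap.le_of_opNorm_le _ hwv x.2.2
  let R : P →ₗ[ℂ] L := R₀.comp j
  have hNR : N ≤ LinearMap.ker R := by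
    rintro _ ⟨c, rfl⟩
    rw [LinearMap.mem_ker, hn]
    change R₀ (j (i _)) = 0
    rw [hji, hR₀, map_smul, smul_smul, mul_neg, inv_mul_cancel₀ hδ']
    simp only [map_neg, neg_smul, one_smul, sub_apply,
      ContinuousLinearMap.comp_apply]
    abel
  let r : P ⧸ N →L[ℂ] L := LinearMap.toContinuousLinearMap (N.liftQ R hNR)
  have hr (x : A × B × A) : r (N.mkQ (i x)) = R₀ x := rfl
  have hmk (x : A × B × A) : ‖N.mkQ (i x)‖ ≤ ‖x.1‖ + (‖x.2.1‖ + ‖x.2.2‖) :=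
    (Submodule.Quotient.norm_mk_le N (i x)).trans (hi x).le
  let p : A →L[ℂ] P ⧸ N := LinearMap.toContinuousLinearMap
    (N.mkQ.comp (i.comp (LinearMap.inl ℂ A (B × A))))
  let q : B →L[ℂ] P ⧸ N := LinearMap.toContinuousLinearMap
    (N.mkQ.comp (i.comp ((LinearMap.inr ℂ A (B × A)).comp (LinearMap.inl ℂ B A))))
  have hp (a : A) : p a = N.mkQ (i (a, 0, 0)) := rfl
  have hq (b : B) : q b = N.mkQ (i (0, b, 0)) := rfl
  refine ⟨P ⧸ N, inferInstance, inferInstance, inferInstance, p, q, r, ?_, ?_, ?_, ?_, ?_⟩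
  · refine p.opNorm_le_bound zero_le_one fun a => ?_
    simpa [hp] using hmk (a, 0, 0)
  · refine q.opNorm_le_bound zero_le_one fun b => ?_
    simpa [hq] using hmk (0, b, 0)
  · refine r.opNorm_le_bound zero_le_one fun x => ?_
    rw [one_mul]
    refine le_of_forall_pos_le_add fun η hη => ?_
    obtain ⟨m, rfl, hm⟩ := Submodule.Quotient.norm_mk_lt x hη
    exact (hR₀le (j m)).trans hm.le
  · refine ContinuousLinearMap.opNorm_le_bound _ hδ.le fun a => ?_
    have key : (p - q.comp g) a = N.mkQ (i (0, 0, (δ : ℂ) • a)) := by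
      change p a - q (g a) = _
      rw [hp, hq, ← map_sub, ← map_sub, ← sub_eq_zero, ← map_sub, ← map_sub]
      rw [Submodule.mkQ_apply, Submodule.Quotient.mk_eq_zero]
      refine ⟨a, ?_⟩
      rw [hn]
      simp
    rw [key]
    refine (hmk _).trans ?_
    simp [norm_smul, abs_of_pos hδ]
  · ext a
    change w a = r (N.mkQ (i (a, 0, 0)))
    rw [hr, hR₀]
    simp

/-- A pure contraction also solves lifting problems for squares commuting only up to `δ`, at the
cost of an extra error `δ`. -/
theorem IsPure.of_almost_commuting {K L : Type*} [NormedAddCommGroup K] [NormedSpace ℂ K]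
    [NormedAddCommGroup L] [NormedSpace ℂ L] {f : K →L[ℂ] L} (hpure : IsPure f) (hf : ‖f‖ ≤ 1)
    {A B : Type} [NormedAddCommGroup A] [NormedSpace ℂ A] [FiniteDimensional ℂ A]
    [NormedAddCommGroup B] [NormedSpace ℂ B] [FiniteDimensional ℂ B]
    (u : A →L[ℂ] K) (g : A →L[ℂ] B) (v : B →L[ℂ] L)
    (hu : ‖u‖ ≤ 1) (hv : ‖v‖ ≤ 1) {δ : ℝ} (hδ : 0 < δ)
    (hcomm : ‖f.comp u - v.comp g‖ ≤ δ) {ε : ℝ} (hε : 0 < ε) :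
    ∃ t : B →L[ℂ] K, ‖t‖ ≤ 1 ∧ ‖t.comp g - u‖ ≤ δ + ε := by
  have hfu : ‖f.comp u‖ ≤ 1 :=
    (f.opNorm_comp_le u).trans (mul_le_one₀ hf (norm_nonneg _) hu)
  obtain ⟨Q, _, _, _, p, q, r, hp, hq, hr, hpq, hrp⟩ :=
    exists_almost_pushout (f.comp u) g v hfu hv hδ hcomm
  obtain ⟨s, hs, hsp⟩ := hpure ε hε A Q u p r hu hp hr hrp
  refine ⟨s.comp q, (s.opNorm_comp_le q).trans (mul_le_one₀ hs (norm_nonneg _) hq), ?_⟩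
  have hsplit : (s.comp q).comp g - u = -(s.comp (p - q.comp g)) + (s.comp p - u) := by
    ext a; simp
  rw [hsplit]
  refine (norm_add_le _ _).trans <| add_le_add ?_ hsp
  rw [norm_neg]
  refine (s.opNorm_comp_le _).trans ?_
  calc ‖s‖ * ‖p - q.comp g‖ ≤ 1 * δ := by gcongr
    _ = δ := one_mul δ

/-- A contraction from a finite-dimensional space is a norm limit of contractions with values in
the members of a directed family of subspaces with dense union. -/
theorem exists_approx_into_member {K : Type*} [NormedAddCommGroup K] [NormedSpace ℂ K]
    {I : Type*} [PartialOrder I] [Nonempty I] [IsDirected I (· ≤ ·)]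
    (F : I → Submodule ℂ K) (hmono : Monotone F) (hdense : Dense (⋃ i, (F i : Set K)))
    {A : Type} [NormedAddCommGroup A] [NormedSpace ℂ A] [FiniteDimensional ℂ A]
    (u : A →L[ℂ] K) (hu : ‖u‖ ≤ 1) {η : ℝ} (hη : 0 < η) :
    ∃ (i : I) (u' : A →L[ℂ] K), (∀ a, u' a ∈ F i) ∧ ‖u'‖ ≤ 1 ∧ ‖u' - u‖ ≤ η := by
  -- Shrinking `u` by the factor `1 - θ` first leaves room for an error `θ` within the unit ball.
  obtain ⟨θ, hθ, hθ1, hθη⟩ : ∃ θ : ℝ, 0 < θ ∧ θ ≤ 1 ∧ 2 * θ ≤ η :=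
    ⟨min 1 (η / 2), by positivity, min_le_left _ _, by linarith [min_le_right 1 (η / 2)]⟩
  let b := Module.finBasis ℂ A
  let Φ : (Fin (Module.finrank ℂ A) → K) → (A →L[ℂ] K) := fun x =>
    ∑ k, (LinearMap.toContinuousLinearMap (b.coord k)).smulRight (x k)
  have hΦ : Continuous Φ := by
    refine continuous_finsetSum _ fun k _ => ?_
    exact (ContinuousLinearMap.smulRightL ℂ A K
      (LinearMap.toContinuousLinearMap (b.coord k))).continuous.comp (continuous_apply k)
  have hΦapp (x) (a : A) : Φ x a = ∑ k, b.repr a k • x k := by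
    simp [Φ]
  let w : A →L[ℂ] K := ((1 - θ : ℝ) : ℂ) • u
  have hΦw : Φ (fun k => w (b k)) = w := by
    ext a
    rw [hΦapp]
    conv_rhs => rw [← b.sum_repr a]
    simp only [map_sum, map_smul]
  have hD : Dense (Set.pi Set.univ fun _ : Fin (Module.finrank ℂ A) => ⋃ i, (F i : Set K)) :=
    dense_pi _ fun _ _ => hdense
  obtain ⟨x, hxball, hx⟩ := hD.inter_open_nonempty (Φ ⁻¹' Metric.ball w θ)
    (Metric.isOpen_ball.preimage hΦ) ⟨fun k => w (b k), by simp [hΦw, hθ]⟩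
  have hx' : ∀ k, ∃ i, x k ∈ F i := fun k => by simpa using hx k (Set.mem_univ k)
  choose idx hidx using hx'
  obtain ⟨i, hi⟩ := Finite.exists_le idx
  have hclose : ‖Φ x - w‖ ≤ θ := by
    simpa [dist_eq_norm] using (Metric.mem_ball.1 hxball).le
  have hwnorm : ‖w‖ ≤ 1 - θ := by
    rw [norm_smul, Complex.norm_real, Real.norm_of_nonneg (by linarith)]
    exact mul_le_of_le_one_right (by linarith) hu
  have hwu : ‖w - u‖ ≤ θ := by
    have : w - u = (-θ : ℂ) • u := by
      simp only [w]; push_cast; module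
    rw [this, norm_smul, norm_neg, Complex.norm_real, Real.norm_of_nonneg hθ.le]
    exact mul_le_of_le_one_right hθ.le hu
  refine ⟨i, Φ x, fun a => ?_, ?_, ?_⟩
  · rw [hΦapp]
    exact (F i).sum_mem fun k _ => (F i).smul_mem _ (hmono (hi k) (hidx k))
  · have := norm_add_le (Φ x - w) w
    rw [sub_add_cancel] at this
    linarith
  · have := norm_add_le (Φ x - w) (w - u)
    rw [sub_add_sub_cancel] at this
    linarith

/-- Pure morphisms are preserved by directed unions: if `f : K → L` restricts to a pure
morphism `K_i → L_i` for an increasing, directed family of closed subspaces `K_i ⊆ K`,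
`L_i ⊆ L` with dense unions, then `f` is pure. -/
theorem isPure_of_directed_union {K L : Type*}
    [NormedAddCommGroup K] [NormedSpace ℂ K] [CompleteSpace K]
    [NormedAddCommGroup L] [NormedSpace ℂ L] [CompleteSpace L]
    (f : K →L[ℂ] L) (hf : ‖f‖ ≤ 1)
    {I : Type*} [PartialOrder I] [Nonempty I] [IsDirected I (· ≤ ·)]
    (Kfam : I → Submodule ℂ K) (Lfam : I → Submodule ℂ L)
    (hKclosed : ∀ i, IsClosed (Kfam i : Set K)) (hLclosed : ∀ i, IsClosed (Lfam i : Set L))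
    (hKmono : Monotone Kfam) (hLmono : Monotone Lfam)
    (hKdense : Dense (⋃ i, (Kfam i : Set K))) (hLdense : Dense (⋃ i, (Lfam i : Set L)))
    (hmaps : ∀ i, ∀ x ∈ Kfam i, f x ∈ Lfam i)
    (hpure : ∀ i (fi : (Kfam i) →L[ℂ] (Lfam i)),
      (∀ x : Kfam i, (fi x : L) = f (x : K)) → IsPure fi) :
    IsPure f := by
  intro ε hε A B _ _ _ _ _ _ u g v hu hg hv hcomm
  -- The approximations of `u` and `v` cost `η` each, so the new square commutes up to `2 * η`.
  obtain ⟨η, hη, hηε⟩ : ∃ η : ℝ, 0 < η ∧ 4 * η = ε := ⟨ε / 4, by positivity, by ring⟩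
  obtain ⟨i, u', hu'mem, hu', hu'u⟩ := exists_approx_into_member Kfam hKmono hKdense u hu hη
  obtain ⟨j, v', hv'mem, hv', hv'v⟩ := exists_approx_into_member Lfam hLmono hLdense v hv hη
  obtain ⟨k, hik, hjk⟩ := exists_ge_ge i j
  let uk : A →L[ℂ] Kfam k := u'.codRestrict (Kfam k) fun a => hKmono hik (hu'mem a)
  let vk : B →L[ℂ] Lfam k := v'.codRestrict (Lfam k) fun b => hLmono hjk (hv'mem b)
  let fk : Kfam k →L[ℂ] Lfam k :=
    (f.comp (Kfam k).subtypeL).codRestrict (Lfam k) fun x => hmaps k x x.2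
  have hfk : ‖fk‖ ≤ 1 := fk.opNorm_le_bound zero_le_one fun x => f.le_of_opNorm_le hf (x : K)
  have huk : ‖uk‖ ≤ 1 := uk.opNorm_le_bound zero_le_one fun a => u'.le_of_opNorm_le hu' a
  have hvk : ‖vk‖ ≤ 1 := vk.opNorm_le_bound zero_le_one fun b => v'.le_of_opNorm_le hv' b
  have happrox : ‖f.comp u' - v'.comp g‖ ≤ 2 * η := by
    have hsplit : f.comp u' - v'.comp g = f.comp (u' - u) - (v' - v).comp g := by
      rw [ContinuousLinearMap.comp_sub, ContinuousLinearMap.sub_comp, hcomm]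
      abel
    rw [hsplit]
    have h1 : ‖f.comp (u' - u)‖ ≤ 1 * η := (f.opNorm_comp_le _).trans (by gcongr)
    have h2 : ‖(v' - v).comp g‖ ≤ η * 1 := ((v' - v).opNorm_comp_le g).trans (by gcongr)
    linarith [norm_sub_le (f.comp (u' - u)) ((v' - v).comp g)]
  have hcommk : ‖fk.comp uk - vk.comp g‖ ≤ 2 * η :=
    ContinuousLinearMap.opNorm_le_bound _ (by positivity) fun a =>
      ContinuousLinearMap.le_of_opNorm_le _ happrox a
  obtain ⟨t, ht, htg⟩ := (hpure k fk fun _ => rfl).of_almost_commuting hfk uk g vk huk hvk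
    (by positivity) hcommk hη
  refine ⟨(Kfam k).subtypeL.comp t,
    ContinuousLinearMap.opNorm_le_bound _ zero_le_one fun b => t.le_of_opNorm_le ht b, ?_⟩
  have htu' : ‖((Kfam k).subtypeL.comp t).comp g - u'‖ ≤ 2 * η + η :=
    ContinuousLinearMap.opNorm_le_bound _ (by positivity) fun a =>
      ContinuousLinearMap.le_of_opNorm_le _ htg a
  have := norm_add_le (((Kfam k).subtypeL.comp t).comp g - u') (u' - u)
  rw [sub_add_sub_cancel] at this
  linarith
end

section
/- Let K be a closed subspace of a Banach space L, with inclusion j : K → L, and suppose that for every ε > 0, all finite-dimensional Banach spaces A and B, and all linear isometric embeddings u : A → K, g : A → B, v : B → L satisfying j ∘ u = v ∘ g, there exists a linear isometric embedding t : B → K with ‖t ∘ g − u‖ ≤ ε. Then K is an almost isometric ideal in L (j is a u-extension): for every finite-dimensional subspace B of L and every ε > 0 there exists a linear map t : B → K such that (1 − ε)‖x‖ ≤ ‖t x‖ ≤ (1 + ε)‖x‖ for all x ∈ B and t x = x for all x ∈ K ∩ B. -/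
/-!
The given square is applied to `A = K ∩ B` and the inclusions `u : A → K`, `g : A → B`,
`v : B → L`; it produces an isometric `t : B → K` which is only `δ`-close to the identity on `A`.
Since `A` is finite-dimensional there is a bounded projection `P : B → A`, and
`T = t - (t ∘ g - u) ∘ P` is exactly the identity on `A`, while
`‖T x - t x‖ ≤ δ ‖P‖ ‖x‖ ≤ ε ‖x‖` as soon as `δ = ε / (‖P‖ + 1)`.

The hypothesis quantifies over spaces in `Type`, whereas subspaces of `L` live in the universe
of `L`; finite-dimensional spaces are therefore first replaced by isometric copies on
coordinate vectors (`exists_type_linearIsometryEquiv`).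
-/

/-- Coordinate vectors of length `n` as a bare vector space, carrying no norm or topology (unlike
`Fin n → ℂ`), so that the norm of any `n`-dimensional space can be put on it. -/
def CoordSpace (n : ℕ) : Type := Fin n → ℂ

noncomputable instance (n : ℕ) : AddCommGroup (CoordSpace n) :=
  inferInstanceAs (AddCommGroup (Fin n → ℂ))

noncomputable instance (n : ℕ) : Module ℂ (CoordSpace n) :=
  inferInstanceAs (Module ℂ (Fin n → ℂ))

theorem exists_type_linearIsometryEquiv (E : Type*) [NormedAddCommGroup E] [NormedSpace ℂ E]
    [FiniteDimensional ℂ E] :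
    ∃ (F : Type) (_ : NormedAddCommGroup F) (_ : NormedSpace ℂ F),
      Nonempty (F ≃ₗᵢ[ℂ] E) := by
  let e : CoordSpace (Module.finrank ℂ E) ≃ₗ[ℂ] E := (Module.finBasis ℂ E).equivFun.symm
  let i1 : NormedAddCommGroup (CoordSpace (Module.finrank ℂ E)) :=
    NormedAddCommGroup.induced _ E e.toLinearMap e.injective
  let i2 : NormedSpace ℂ (CoordSpace (Module.finrank ℂ E)) :=
    NormedSpace.induced ℂ _ E e.toLinearMap
  exact ⟨_, i1, i2, ⟨⟨e, fun _ => rfl⟩⟩⟩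

/-- Let `K` be a closed subspace of a Banach space `L` with inclusion `j : K → L`, and
suppose that for every `ε > 0` and every commutative square of linear isometric embeddings
`u : A → K`, `g : A → B`, `v : B → L` (with `A`, `B` finite-dimensional) satisfying
`j ∘ u = v ∘ g`, there is a linear isometric embedding `t : B → K` with `‖t ∘ g - u‖ ≤ ε`.
Then `K` is an almost isometric ideal in `L`: for every finite-dimensional subspace `B` of
`L` and every `ε > 0` there is a linear map `t : B → K` with
`(1 - ε)‖x‖ ≤ ‖t x‖ ≤ (1 + ε)‖x‖` for all `x ∈ B` and `t x = x` for all `x ∈ K ∩ B`. -/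
theorem almost_isometric_ideal_of_saturation {L : Type*}
    [NormedAddCommGroup L] [NormedSpace ℂ L] [CompleteSpace L]
    (K : Submodule ℂ L) (hK : IsClosed (K : Set L))
    (hsat : ∀ ε : ℝ, 0 < ε →
      ∀ (A B : Type) [NormedAddCommGroup A] [NormedSpace ℂ A] [FiniteDimensional ℂ A]
        [NormedAddCommGroup B] [NormedSpace ℂ B] [FiniteDimensional ℂ B]
        (u : A →L[ℂ] K) (g : A →L[ℂ] B) (v : B →L[ℂ] L),
        (∀ x : A, ‖u x‖ = ‖x‖) → (∀ x : A, ‖g x‖ = ‖x‖) → (∀ x : B, ‖v x‖ = ‖x‖) →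
        K.subtypeL.comp u = v.comp g →
        ∃ t : B →L[ℂ] K, (∀ x : B, ‖t x‖ = ‖x‖) ∧ ‖t.comp g - u‖ ≤ ε) :
    ∀ (B : Submodule ℂ L), FiniteDimensional ℂ B →
      ∀ ε : ℝ, 0 < ε →
        ∃ t : B →L[ℂ] K,
          (∀ x : B, (1 - ε) * ‖x‖ ≤ ‖t x‖ ∧ ‖t x‖ ≤ (1 + ε) * ‖x‖) ∧
          (∀ x : B, (x : L) ∈ K → ((t x : L) = (x : L))) := by
  intro B hB ε hε
  let A : Submodule ℂ B := K.comap B.subtype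
  let u₀ : A →L[ℂ] K := (B.subtypeL.comp A.subtypeL).codRestrict K fun x => x.2
  obtain ⟨P, hP⟩ : A.ClosedComplemented := Submodule.ClosedComplemented.of_finiteDimensional A
  set δ : ℝ := ε / (‖P‖ + 1) with hδ
  have hP1 : 0 < ‖P‖ + 1 := by positivity
  have hδ0 : 0 < δ := by positivity
  have hδP : δ * ‖P‖ ≤ ε := by
    have h : δ * (‖P‖ + 1) = ε := div_mul_cancel₀ _ hP1.ne'
    linarith
  obtain ⟨t, ht, htu⟩ : ∃ t : B →L[ℂ] K, (∀ x : B, ‖t x‖ = ‖x‖) ∧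
      ‖t.comp A.subtypeL - u₀‖ ≤ δ := by
    obtain ⟨FA, _, _, ⟨eA⟩⟩ := exists_type_linearIsometryEquiv A
    obtain ⟨FB, _, _, ⟨eB⟩⟩ := exists_type_linearIsometryEquiv B
    have : FiniteDimensional ℂ FA := eA.toLinearEquiv.symm.finiteDimensional
    have : FiniteDimensional ℂ FB := eB.toLinearEquiv.symm.finiteDimensional
    let a : FA →L[ℂ] A := eA.toLinearIsometry.toContinuousLinearMap
    let b : FB →L[ℂ] B := eB.toLinearIsometry.toContinuousLinearMap
    let b' : B →L[ℂ] FB := eB.symm.toLinearIsometry.toContinuousLinearMap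
    have ha : ∀ x, ‖a x‖ = ‖x‖ := eA.norm_map
    have hb : ∀ x, ‖b x‖ = ‖x‖ := eB.norm_map
    have hb' : ∀ x, ‖b' x‖ = ‖x‖ := eB.symm.norm_map
    have hbb' : ∀ x, b (b' x) = x := eB.apply_symm_apply
    obtain ⟨s, hs, hsu⟩ := hsat δ hδ0 FA FB (u₀.comp a) (b'.comp (A.subtypeL.comp a))
      (B.subtypeL.comp b) (fun x => ha x) (fun x => (hb' _).trans (ha x)) (fun x => hb x) (by
        ext x
        change ((a x : B) : L) = ((b (b' (a x : B)) : B) : L)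
        rw [hbb'])
    refine ⟨s.comp b', fun x => (hs _).trans (hb' x), ?_⟩
    refine ContinuousLinearMap.opNorm_le_bound _ hδ0.le fun x => ?_
    obtain ⟨y, rfl⟩ := eA.surjective x
    rw [eA.norm_map]
    exact ContinuousLinearMap.le_of_opNorm_le _ hsu y
  set D : A →L[ℂ] K := t.comp A.subtypeL - u₀ with hD
  refine ⟨t - D.comp P, fun x => ?_, fun x hx => ?_⟩
  · have hDx : ‖D (P x)‖ ≤ ε * ‖x‖ :=
      calc ‖D (P x)‖ ≤ δ * ‖P x‖ := D.le_of_opNorm_le htu _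
        _ ≤ δ * (‖P‖ * ‖x‖) := by gcongr; exact P.le_opNorm x
        _ = δ * ‖P‖ * ‖x‖ := by ring
        _ ≤ ε * ‖x‖ := by gcongr
    have h1 := norm_sub_norm_le (t x) (D (P x))
    have h2 := norm_sub_le (t x) (D (P x))
    rw [ht] at h1 h2
    change _ ≤ ‖t x - D (P x)‖ ∧ ‖t x - D (P x)‖ ≤ _
    constructor <;> linarith
  · have h : (t - D.comp P) x = u₀ ⟨x, hx⟩ := by
      change t x - D (P x) = _
      rw [show P x = ⟨x, hx⟩ from hP ⟨x, hx⟩]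
      exact sub_sub_cancel _ _
    rw [h]
    rfl
end

section
/- A Banach space K is a Lindenstrauss space if and only if there exist a Gurarii space L and a morphism f : K → L that approximately splits, i.e. for every ε > 0 there exists a morphism s : L → K with ‖s ∘ f − id_K‖ ≤ ε. -/
/-!
Call a space `M` approximately injective (`ApproxInjective`) if every contraction into `M` from a
subspace of a finite-dimensional space extends, up to an arbitrarily small error, to a contraction
on the whole space. For Banach spaces this is the same as being a Lindenstrauss space: one
direction applies purity to the pushout of `K ← S → B`, the other factors `u` through the range of
`g`. Gurarii spaces are approximately injective, and approximate injectivity passes along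
approximately split morphisms, so a space that approximately splits into a Gurarii space is a
Lindenstrauss space.

For the converse, every `K` is embedded into a Gurarii space `L` in such a way that contractions
from `K` into an approximately injective Banach space `M` extend to `L` (with the same bound, and
exactly); for a Lindenstrauss space `K` the extension of the identity of `K` is a retraction. The
space `L` is the completion of the union of a chain `K = X 0 ⊆ X 1 ⊆ ⋯`, where `X (n + 1)` glues
to `X n` a copy of `B` for every finite-dimensional `B` and every `(1 ± δ)`-isometric map `u` from
a subspace `S` of `B` to `X n`, leaving a gap of size `2δ` between `u` and the inclusion of `S` in
the new copy of `B`. Half of the gap is needed to turn `u` into a contraction, and the other half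
absorbs the error in the approximate injectivity of `M`; this is why contractions into `M` extend
over one step exactly, and then over the whole chain, although `M` is only approximately injective.

All pushouts and gluings are normed by suprema over families of linear functionals
(`exists_quotient_of_functionals`). Upper bounds for such norms hold by definition, lower bounds
follow from the Hahn–Banach theorem, and a linear map into a normed space is contractive as soon as
its composites with functionals of norm at most one belong to the family.
-/

universe u

/-- A Banach space `K` is a *Lindenstrauss space* if every linear isometric embedding
of `K` into a Banach space is pure. -/
def IsLindenstrauss (K : Type u) [NormedAddCommGroup K] [NormedSpace ℂ K] : Prop :=
  ∀ (L : Type u) [NormedAddCommGroup L] [NormedSpace ℂ L] [CompleteSpace L]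
    (f : K →L[ℂ] L), (∀ x : K, ‖f x‖ = ‖x‖) → IsPure f

/-- A Banach space `K` is a *Gurarii space* (approximately saturated w.r.t. isometries
between finite-dimensional spaces) if for every linear isometric embedding `h : A → B`
between finite-dimensional Banach spaces, every linear isometric embedding `u : A → K`
and every `ε > 0` there is a linear isometric embedding `g : B → K` with `‖g ∘ h - u‖ ≤ ε`. -/
def IsGurarii (K : Type*) [NormedAddCommGroup K] [NormedSpace ℂ K] : Prop :=
  ∀ (A B : Type) [NormedAddCommGroup A] [NormedSpace ℂ A] [FiniteDimensional ℂ A]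
    [NormedAddCommGroup B] [NormedSpace ℂ B] [FiniteDimensional ℂ B]
    (h : A →L[ℂ] B), (∀ x : A, ‖h x‖ = ‖x‖) →
    ∀ u : A →L[ℂ] K, (∀ x : A, ‖u x‖ = ‖x‖) →
      ∀ ε : ℝ, 0 < ε →
        ∃ g : B →L[ℂ] K, (∀ x : B, ‖g x‖ = ‖x‖) ∧ ‖g.comp h - u‖ ≤ ε

/-! ### Extending and lifting linear maps -/

lemma exists_contraction_lift {V Y M : Type*} [AddCommGroup V] [Module ℂ V]
    [NormedAddCommGroup Y] [NormedSpace ℂ Y] [NormedAddCommGroup M] [NormedSpace ℂ M]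
    [CompleteSpace M] (q : V →ₗ[ℂ] Y) (hq : DenseRange q) (T : V →ₗ[ℂ] M)
    (hT : ∀ v, ‖T v‖ ≤ ‖q v‖) :
    ∃ T' : Y →L[ℂ] M, ‖T'‖ ≤ 1 ∧ ∀ v, T' (q v) = T v :=
  ⟨T.extendOfNorm q, LinearMap.opNorm_extendOfNorm_le hq zero_le_one (by simpa using hT),
    fun v => LinearMap.extendOfNorm_eq hq ⟨1, by simpa using hT⟩ v⟩

lemma norm_apply_le_of_norm_le_one {X Y : Type*} [NormedAddCommGroup X] [NormedSpace ℂ X]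
    [NormedAddCommGroup Y] [NormedSpace ℂ Y] {f : X →L[ℂ] Y} (hf : ‖f‖ ≤ 1) (x : X) :
    ‖f x‖ ≤ ‖x‖ := by
  simpa using f.le_of_opNorm_le hf x

/-- Every family of linear functionals that is pointwise bounded on a vector space `V` induces
the seminorm `v ↦ sup ‖φ v‖`, and hence a normed quotient `Y` of `V`. The last two conjuncts say
that `‖q v‖` is this supremum. -/
lemma exists_quotient_of_functionals {V : Type u} [AddCommGroup V] [Module ℂ V]
    (Φ : Set (V →ₗ[ℂ] ℂ)) (hΦ : ∀ v, ∃ C : ℝ, ∀ φ ∈ Φ, ‖φ v‖ ≤ C) :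
    ∃ (Y : Type u) (_ : NormedAddCommGroup Y) (_ : NormedSpace ℂ Y) (q : V →ₗ[ℂ] Y),
      Function.Surjective q ∧ (∀ φ ∈ Φ, ∀ v, ‖φ v‖ ≤ ‖q v‖) ∧
      ∀ v (C : ℝ), 0 ≤ C → (∀ φ ∈ Φ, ‖φ v‖ ≤ C) → ‖q v‖ ≤ C := by
  let ev : V →ₗ[ℂ] lp (fun _ : Φ => ℂ) ⊤ :=
    { toFun := fun v => ⟨fun φ => φ.1 v, by
        obtain ⟨C, hC⟩ := hΦ v
        exact memℓp_infty ⟨C, by rintro _ ⟨φ, rfl⟩; exact hC φ.1 φ.2⟩⟩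
      map_add' := fun v w => Subtype.ext (funext fun φ => map_add φ.1 v w)
      map_smul' := fun c v => by ext φ; simp }
  refine ⟨LinearMap.range ev, inferInstance, inferInstance, ev.rangeRestrict,
    ev.surjective_rangeRestrict, fun φ hφ v => ?_, fun v C hC h => ?_⟩
  · exact lp.norm_apply_le_norm ENNReal.top_ne_zero (ev v) ⟨φ, hφ⟩
  · exact lp.norm_le_of_forall_le (f := ev v) hC fun φ => h φ.1 φ.2

/-- A seminormed vector space has a normed quotient. -/
lemma exists_quotient_of_seminorm {V : Type u} [AddCommGroup V] [Module ℂ V]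
    (p : Seminorm ℂ V) :
    ∃ (Y : Type u) (_ : NormedAddCommGroup Y) (_ : NormedSpace ℂ Y) (q : V →ₗ[ℂ] Y),
      Function.Surjective q ∧ ∀ v, ‖q v‖ = p v := by
  let : SeminormedAddCommGroup V := p.toAddGroupSeminorm.toSeminormedAddCommGroup
  let : NormedSpace ℂ V := ⟨fun c v => (map_smul_eq_mul p c v).le⟩
  refine ⟨SeparationQuotient V, inferInstance, inferInstance,
    (SeparationQuotient.mkCLM ℂ V).toLinearMap, SeparationQuotient.surjective_mk, fun v => ?_⟩
  exact SeparationQuotient.norm_mk v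

/-! ### Approximate injectivity -/

/-- `M` is approximately injective with respect to isometric embeddings of finite-dimensional
spaces: contractions into `M` defined on a subspace `S` of a finite-dimensional space `B` extend
approximately to contractions on `B`. -/
def ApproxInjective (M : Type*) [NormedAddCommGroup M] [NormedSpace ℂ M] : Prop :=
  ∀ (B : Type) [NormedAddCommGroup B] [NormedSpace ℂ B] [FiniteDimensional ℂ B]
    (S : Submodule ℂ B) (w : S →L[ℂ] M), ‖w‖ ≤ 1 → ∀ ε : ℝ, 0 < ε →
      ∃ t : B →L[ℂ] M, ‖t‖ ≤ 1 ∧ ∀ a : S, ‖t a - w a‖ ≤ ε * ‖a‖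

lemma exists_extension_le_one {B : Type*} [NormedAddCommGroup B] [NormedSpace ℂ B]
    (S : Submodule ℂ B) (w : S →L[ℂ] ℂ) (hw : ‖w‖ ≤ 1) :
    ∃ t : B →L[ℂ] ℂ, ‖t‖ ≤ 1 ∧ ∀ a : S, t a = w a := by
  obtain ⟨t, ht, hn⟩ := exists_extension_norm_eq S w
  exact ⟨t, hn.trans_le hw, ht⟩

lemma approxInjective_complex : ApproxInjective ℂ := by
  intro B _ _ _ S w hw ε hε
  obtain ⟨t, ht, h⟩ := exists_extension_le_one S w hw
  exact ⟨t, ht, fun a => by rw [h, sub_self, norm_zero]; positivity⟩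

/-- A Lindenstrauss space is approximately injective: a contraction `w : S → K` on `S ≤ B` has a
pushout `K → M ← B`, in which `K → M` is isometric, hence pure. The norm on the pushout is the
supremum over all pairs of functionals of norm at most one on `K` and `B` that agree on `S`. -/
lemma IsLindenstrauss.approxInjective {K : Type u} [NormedAddCommGroup K] [NormedSpace ℂ K]
    (hK : IsLindenstrauss K) : ApproxInjective K := by
  intro B _ _ _ S w hw ε hε
  let Φ : Set ((K × B) →ₗ[ℂ] ℂ) := {φ | (∀ k, ‖φ (k, 0)‖ ≤ ‖k‖) ∧ (∀ b, ‖φ (0, b)‖ ≤ ‖b‖) ∧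
    ∀ a : S, φ (w a, 0) = φ (0, a)}
  obtain ⟨Y, _, _, q, -, hq1, hq2⟩ := exists_quotient_of_functionals Φ (by
    rintro ⟨k, b⟩
    refine ⟨‖k‖ + ‖b‖, fun φ hφ => ?_⟩
    have : φ (k, b) = φ (k, 0) + φ (0, b) := by rw [← map_add]; simp
    rw [this]
    exact (norm_add_le _ _).trans (add_le_add (hφ.1 k) (hφ.2.1 b)))
  let M := UniformSpace.Completion Y
  let i : Y →ₗᵢ[ℂ] M := UniformSpace.Completion.toComplₗᵢ
  have hk1 : ∀ k, ‖q (k, 0)‖ ≤ 1 * ‖k‖ := fun k => by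
    rw [one_mul]; exact hq2 _ _ (norm_nonneg _) fun φ hφ => hφ.1 k
  have hb1 : ∀ b, ‖q (0, b)‖ ≤ 1 * ‖b‖ := fun b => by
    rw [one_mul]; exact hq2 _ _ (norm_nonneg _) fun φ hφ => hφ.2.1 b
  let j : K →L[ℂ] M := i.toContinuousLinearMap.comp
    ((q.comp (LinearMap.inl ℂ K B)).mkContinuous 1 hk1)
  let v : B →L[ℂ] M := i.toContinuousLinearMap.comp
    ((q.comp (LinearMap.inr ℂ K B)).mkContinuous 1 hb1)
  have hj : ∀ k, j k = i (q (k, 0)) := fun k => rfl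
  have hv : ∀ b, v b = i (q (0, b)) := fun b => rfl
  have hjiso : ∀ k, ‖j k‖ = ‖k‖ := by
    intro k
    rw [hj, i.norm_map]
    refine le_antisymm (by simpa using hk1 k) ?_
    obtain ⟨χ, hχ1, hχ⟩ := exists_dual_vector'' ℂ k
    obtain ⟨ψ, hψ1, hψ⟩ := exists_extension_le_one S (χ.comp w)
      ((χ.opNorm_comp_le w).trans (mul_le_one₀ hχ1 (norm_nonneg _) hw))
    have := hq1 (LinearMap.coprod χ.toLinearMap ψ.toLinearMap)
      ⟨fun k => by simpa using norm_apply_le_of_norm_le_one hχ1 k,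
        fun b => by simpa using norm_apply_le_of_norm_le_one hψ1 b,
        fun a => by simpa using (hψ a).symm⟩ (k, 0)
    simpa [hχ] using this
  obtain ⟨t, ht1, ht⟩ := hK M j hjiso ε hε S B w S.subtypeL v hw
    S.norm_subtypeL_le
    (v.opNorm_le_bound zero_le_one fun b => by rw [hv, i.norm_map]; exact hb1 b)
    (by
      ext a
      change j (w a) = v a
      rw [hj, hv]
      congr 1
      rw [← sub_eq_zero, ← map_sub, ← norm_le_zero_iff]
      refine hq2 _ _ le_rfl fun φ hφ => ?_
      rw [map_sub, hφ.2.2 a, sub_self, norm_zero])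
  exact ⟨t, ht1, fun a => (t.comp S.subtypeL - w).le_of_opNorm_le ht a⟩

/-- An approximately injective space is a Lindenstrauss space: in a square `j ∘ u = v ∘ g` with
`j` isometric, `‖u a‖ ≤ ‖g a‖`, so `u` factors through a contraction on the range of `g`. -/
lemma ApproxInjective.isLindenstrauss {K : Type u} [NormedAddCommGroup K] [NormedSpace ℂ K]
    [CompleteSpace K] (hK : ApproxInjective K) : IsLindenstrauss K := by
  intro M _ _ _ j hj ε hε A B _ _ _ _ _ _ u g v hu hg hv huv
  obtain ⟨w, hw, hwu⟩ := exists_contraction_lift g.toLinearMap.rangeRestrict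
    g.toLinearMap.surjective_rangeRestrict.denseRange u.toLinearMap (fun a => by
      have h : j (u a) = v (g a) := congrArg (fun f => f a) huv
      change ‖u a‖ ≤ ‖g a‖
      rw [← hj, h]
      exact norm_apply_le_of_norm_le_one hv _)
  obtain ⟨t, ht, htw⟩ := hK B _ w hw ε hε
  refine ⟨t, ht, ContinuousLinearMap.opNorm_le_bound _ hε.le fun a => ?_⟩
  have h1 := htw (g.toLinearMap.rangeRestrict a)
  rw [hwu] at h1
  exact h1.trans (mul_le_mul_of_nonneg_left (norm_apply_le_of_norm_le_one hg a) hε.le)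

/-- A Gurarii space is approximately injective. Given a contraction `w : S → L` on `S ≤ B`, the
pushout of `B ← S → w(S)` is realized as a quotient `q : B → P` with `‖q a‖ = ‖w a‖` on `S`; then
`w` factors through an isometry on `q(S)`, which approximately extends to `P`. -/
lemma IsGurarii.approxInjective {L : Type*} [NormedAddCommGroup L] [NormedSpace ℂ L]
    [CompleteSpace L] (hL : IsGurarii L) : ApproxInjective L := by
  intro B _ _ _ S w hw ε hε
  let Φ : Set (B →ₗ[ℂ] ℂ) := {φ | (∀ b, ‖φ b‖ ≤ ‖b‖) ∧ ∀ a : S, ‖φ a‖ ≤ ‖w a‖}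
  obtain ⟨P, _, _, q, hqs, hq1, hq2⟩ := exists_quotient_of_functionals Φ
    fun b => ⟨‖b‖, fun φ hφ => hφ.1 b⟩
  have hqb : ∀ b, ‖q b‖ ≤ ‖b‖ := fun b => hq2 _ _ (norm_nonneg _) fun φ hφ => hφ.1 b
  have hqa : ∀ a : S, ‖q a‖ = ‖w a‖ := by
    intro a
    refine le_antisymm (hq2 _ _ (norm_nonneg _) fun φ hφ => hφ.2 a) ?_
    obtain ⟨χ, hχ1, hχ⟩ := exists_dual_vector'' ℂ (w a)
    obtain ⟨ψ, hψ1, hψ⟩ := exists_extension_le_one S (χ.comp w)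
      ((χ.opNorm_comp_le w).trans (mul_le_one₀ hχ1 (norm_nonneg _) hw))
    have := hq1 ψ.toLinearMap ⟨norm_apply_le_of_norm_le_one hψ1, fun a => by
      simpa [hψ] using norm_apply_le_of_norm_le_one hχ1 (w a)⟩ a
    simpa [hψ, hχ] using this
  have : FiniteDimensional ℂ P := Module.Finite.of_surjective q hqs
  let qS : S →ₗ[ℂ] P := q.comp S.subtype
  obtain ⟨u, hu, huw⟩ := exists_contraction_lift qS.rangeRestrict
    qS.surjective_rangeRestrict.denseRange w.toLinearMap fun a => (hqa a).ge
  obtain ⟨g, hg, hgu⟩ := hL (LinearMap.range qS) P (LinearMap.range qS).subtypeL (fun _ => rfl)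
    u (by
      intro x
      obtain ⟨a, rfl⟩ := qS.surjective_rangeRestrict x
      rw [huw]
      exact (hqa a).symm) ε hε
  refine ⟨g.comp (q.mkContinuous 1 (by simpa using hqb)),
    ContinuousLinearMap.opNorm_le_bound _ zero_le_one fun b => ?_, fun a => ?_⟩
  · rw [one_mul]
    exact (hg _).trans_le (hqb b)
  · have h1 := (g.comp (LinearMap.range qS).subtypeL - u).le_of_opNorm_le hgu (qS.rangeRestrict a)
    rw [sub_apply, huw] at h1
    exact h1.trans (mul_le_mul_of_nonneg_left (hqb a) hε.le)

lemma ApproxInjective.of_approxSplit {K L : Type*} [NormedAddCommGroup K] [NormedSpace ℂ K]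
    [NormedAddCommGroup L] [NormedSpace ℂ L] (hL : ApproxInjective L) (f : K →L[ℂ] L)
    (hf : ‖f‖ ≤ 1)
    (hs : ∀ ε : ℝ, 0 < ε →
      ∃ s : L →L[ℂ] K, ‖s‖ ≤ 1 ∧ ‖s.comp f - ContinuousLinearMap.id ℂ K‖ ≤ ε) :
    ApproxInjective K := by
  intro B _ _ _ S w hw ε hε
  obtain ⟨t, ht, htw⟩ := hL B S (f.comp w)
    ((f.opNorm_comp_le w).trans (mul_le_one₀ hf (norm_nonneg _) hw)) (ε / 2) (half_pos hε)
  obtain ⟨s, hs1, hs⟩ := hs (ε / 2) (half_pos hε)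
  refine ⟨s.comp t, (s.opNorm_comp_le t).trans (mul_le_one₀ hs1 (norm_nonneg _) ht), fun a => ?_⟩
  have h1 : ‖s (t a - f (w a))‖ ≤ ε / 2 * ‖a‖ :=
    (norm_apply_le_of_norm_le_one hs1 _).trans (htw a)
  have h2 : ‖s (f (w a)) - w a‖ ≤ ε / 2 * ‖a‖ :=
    ((s.comp f - ContinuousLinearMap.id ℂ K).le_of_opNorm_le hs (w a)).trans
      (mul_le_mul_of_nonneg_left (norm_apply_le_of_norm_le_one hw a) (half_pos hε).le)
  calc ‖s (t a) - w a‖ = ‖s (t a - f (w a)) + (s (f (w a)) - w a)‖ := by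
        congr 1; rw [map_sub]; abel
    _ ≤ ε * ‖a‖ := (norm_add_le _ _).trans (by linarith)

/-! ### Gluing finite-dimensional extensions to a space -/

/-- A finite-dimensional normed space, given by a norm on `ℂⁿ`. Up to isometry these are all
finite-dimensional normed spaces, and they form a type in the lowest universe. -/
structure FDNorm where
  /-- The dimension. -/
  n : ℕ
  /-- The norm, unrelated to the sup norm that `Fin n → ℂ` carries by default. -/
  nm : Norm (Fin n → ℂ)
  core : @NormedSpace.Core ℂ (Fin n → ℂ) _ _ _ nm

/-- The vector space `ℂⁿ` underlying `P`, carrying the norm of `P`. -/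
def FDNorm.Carrier (P : FDNorm) : Type := Fin P.n → ℂ

namespace FDNorm

variable (P : FDNorm)

instance : AddCommGroup P.Carrier := inferInstanceAs (AddCommGroup (Fin P.n → ℂ))

instance : Module ℂ P.Carrier := inferInstanceAs (Module ℂ (Fin P.n → ℂ))

instance : Norm P.Carrier := P.nm

lemma carrierCore : NormedSpace.Core ℂ P.Carrier := P.core

noncomputable instance : NormedAddCommGroup P.Carrier := NormedAddCommGroup.ofCore P.carrierCore

noncomputable instance : NormedSpace ℂ P.Carrier := NormedSpace.ofCore P.carrierCore

instance : FiniteDimensional ℂ P.Carrier := inferInstanceAs (FiniteDimensional ℂ (Fin P.n → ℂ))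

end FDNorm

lemma FDNorm.exists_isometry (B : Type) [NormedAddCommGroup B] [NormedSpace ℂ B]
    [FiniteDimensional ℂ B] :
    ∃ (P : FDNorm) (e : B ≃ₗ[ℂ] P.Carrier), ∀ b, ‖e b‖ = ‖b‖ := by
  let e := (Module.finBasis ℂ B).equivFun
  let nm : Norm (Fin (Module.finrank ℂ B) → ℂ) := ⟨fun x => ‖e.symm x‖⟩
  have hcore : @NormedSpace.Core ℂ _ _ _ _ nm :=
    @NormedSpace.Core.mk ℂ _ _ _ _ nm
      (@SeminormedSpace.Core.mk ℂ _ _ _ nm _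
        (fun x => norm_nonneg (e.symm x))
        (fun c x => by
          change ‖e.symm (c • x)‖ = ‖c‖ * ‖e.symm x‖
          rw [map_smul, norm_smul])
        (fun x y => by
          change ‖e.symm (x + y)‖ ≤ ‖e.symm x‖ + ‖e.symm y‖
          rw [map_add]
          exact norm_add_le _ _))
      (fun x => by
        change ‖e.symm x‖ = 0 ↔ x = 0
        simp)
  refine ⟨⟨_, nm, hcore⟩, e, fun b => ?_⟩
  change ‖e.symm (e b)‖ = ‖b‖
  simp

/-- An extension problem over `X`: a `(1 ± δ)`-isometric linear map into `X` from a subspace `S`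
of a finite-dimensional space. -/
structure ExtProblem (X : Type u) [NormedAddCommGroup X] [NormedSpace ℂ X] where
  /-- The finite-dimensional space. -/
  B : FDNorm
  /-- The subspace. -/
  S : Submodule ℂ B.Carrier
  /-- The almost isometric map. -/
  u : S →L[ℂ] X
  /-- The distortion of `u`. -/
  δ : ℝ
  pos : 0 < δ
  lt_one : δ < 1
  le_norm : ∀ a, (1 - δ) * ‖a‖ ≤ ‖u a‖
  norm_le : ∀ a, ‖u a‖ ≤ (1 + δ) * ‖a‖

section Glue

variable {X : Type u} [NormedAddCommGroup X] [NormedSpace ℂ X]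

/-- A map `t : B → M` is a `2δ`-approximate solution, relative to `s : X → M`, of the extension
problem `i` if it is contractive and `2δ`-close to `s ∘ u` on `S`. -/
def ExtProblem.Solves (i : ExtProblem X) {M : Type*} [NormedAddCommGroup M] [NormedSpace ℂ M]
    (s : X → M) (t : i.B.Carrier → M) : Prop :=
  (∀ b, ‖t b‖ ≤ ‖b‖) ∧ ∀ a : i.S, ‖t a - s (i.u a)‖ ≤ 2 * i.δ * ‖a‖

/-- The half of the tolerance `2δ` not used up by scaling `s ∘ u` to a contraction absorbs the
error of the approximate extension. -/
lemma ExtProblem.exists_solves (i : ExtProblem X) {M : Type*} [NormedAddCommGroup M]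
    [NormedSpace ℂ M] (hM : ApproxInjective M) (s : X →L[ℂ] M) (hs : ‖s‖ ≤ 1) :
    ∃ t : i.B.Carrier →L[ℂ] M, i.Solves s t := by
  have hδ := i.pos
  have h0 : 0 < 1 + i.δ := by linarith
  let c : ℂ := ((1 + i.δ)⁻¹ : ℝ)
  have hc : ‖c‖ = (1 + i.δ)⁻¹ := by
    rw [Complex.norm_real, Real.norm_of_nonneg (inv_nonneg.2 h0.le)]
  have hsu : ∀ a, ‖s (i.u a)‖ ≤ (1 + i.δ) * ‖a‖ := fun a =>
    (norm_apply_le_of_norm_le_one hs _).trans (i.norm_le a)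
  obtain ⟨t, ht, h⟩ := hM i.B.Carrier i.S (c • s.comp i.u)
    (ContinuousLinearMap.opNorm_le_bound _ zero_le_one fun a => by
      change ‖c • s (i.u a)‖ ≤ _
      rw [norm_smul, hc, one_mul, inv_mul_le_iff₀ h0]
      exact hsu a) i.δ hδ
  refine ⟨t, norm_apply_le_of_norm_le_one ht, fun a => ?_⟩
  have h1 : ‖c • s (i.u a) - s (i.u a)‖ ≤ i.δ * ‖a‖ := by
    have e : c • s (i.u a) - s (i.u a) = (c - 1) • s (i.u a) := by rw [sub_smul, one_smul]
    have hc1 : ‖c - 1‖ = i.δ * (1 + i.δ)⁻¹ := by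
      have : c - 1 = ((-(i.δ * (1 + i.δ)⁻¹) : ℝ) : ℂ) := by
        rw [← Complex.ofReal_one, ← Complex.ofReal_sub]
        congr 1
        field_simp
        ring
      rw [this, Complex.norm_real, norm_neg, Real.norm_of_nonneg (by positivity)]
    rw [e, norm_smul, hc1, mul_assoc]
    refine mul_le_mul_of_nonneg_left ?_ hδ.le
    rw [inv_mul_le_iff₀ h0]
    exact hsu a
  have h2 : ‖t a - c • s (i.u a)‖ ≤ i.δ * ‖a‖ := h a
  calc ‖t a - s (i.u a)‖ ≤ ‖t a - c • s (i.u a)‖ + ‖c • s (i.u a) - s (i.u a)‖ :=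
        norm_sub_le_norm_sub_add_norm_sub _ _ _
    _ ≤ 2 * i.δ * ‖a‖ := by linarith

open scoped Classical in
/-- The algebraic direct sum of `X` and the spaces of all extension problems over `X`. -/
abbrev GlueSum (X : Type u) [NormedAddCommGroup X] [NormedSpace ℂ X] : Type u :=
  X × (Π₀ i : ExtProblem X, i.B.Carrier)

open scoped Classical in
/-- Linear maps on the direct sum that are contractive on `X` and solve every extension
problem. -/
def Admissible {M : Type*} [NormedAddCommGroup M] [NormedSpace ℂ M]
    (T : GlueSum X →ₗ[ℂ] M) : Prop :=
  (∀ x, ‖T (x, 0)‖ ≤ ‖x‖) ∧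
    ∀ i : ExtProblem X, i.Solves (fun x => T (x, 0)) fun b => T (0, DFinsupp.single i b)

open scoped Classical in
lemma exists_admissible {M : Type*} [NormedAddCommGroup M] [NormedSpace ℂ M]
    (s : X →L[ℂ] M) (hs : ‖s‖ ≤ 1) (t : ∀ i : ExtProblem X, i.B.Carrier →L[ℂ] M)
    (ht : ∀ i : ExtProblem X, i.Solves s (t i)) :
    ∃ T : GlueSum X →ₗ[ℂ] M, Admissible T ∧ (∀ x, T (x, 0) = s x) ∧
      ∀ i b, T (0, DFinsupp.single i b) = t i b := by
  let T : GlueSum X →ₗ[ℂ] M :=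
    LinearMap.coprod s.toLinearMap (DFinsupp.lsum ℕ fun i => (t i).toLinearMap)
  have h1 : ∀ x, T (x, 0) = s x := fun x => by simp [T]
  have h2 : ∀ i b, T (0, DFinsupp.single i b) = t i b := fun i b => by simp [T]
  refine ⟨T, ⟨fun x => ?_, fun i => ?_⟩, h1, h2⟩
  · rw [h1]; exact norm_apply_le_of_norm_le_one hs x
  · simp only [h1, h2]; exact ht i

open scoped Classical in
lemma Admissible.bounded (v : GlueSum X) :
    ∃ C : ℝ, ∀ φ ∈ {φ : GlueSum X →ₗ[ℂ] ℂ | Admissible φ}, ‖φ v‖ ≤ C := by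
  obtain ⟨x, b⟩ := v
  have key : ∀ b : Π₀ i : ExtProblem X, i.B.Carrier, ∃ C : ℝ,
      ∀ φ : GlueSum X →ₗ[ℂ] ℂ, Admissible φ → ‖φ (0, b)‖ ≤ C := by
    intro b
    induction b using DFinsupp.induction with
    | h0 => exact ⟨0, fun φ _ => by rw [← Prod.zero_eq_mk, map_zero, norm_zero]⟩
    | ha i b f _ _ ih =>
      obtain ⟨C, hC⟩ := ih
      refine ⟨‖b‖ + C, fun φ hφ => ?_⟩
      have e : φ (0, DFinsupp.single i b + f) = φ (0, DFinsupp.single i b) + φ (0, f) := by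
        rw [← map_add]; simp
      rw [e]
      exact (norm_add_le _ _).trans (add_le_add ((hφ.2 i).1 b) (hC φ hφ))
  obtain ⟨C, hC⟩ := key b
  refine ⟨‖x‖ + C, fun φ hφ => ?_⟩
  have e : φ (x, b) = φ (x, 0) + φ (0, b) := by rw [← map_add]; simp
  rw [e]
  exact (norm_add_le _ _).trans (add_le_add (hφ.1 x) (hC φ hφ))

lemma Admissible.comp {M : Type*} [NormedAddCommGroup M] [NormedSpace ℂ M]
    {T : GlueSum X →ₗ[ℂ] M} (hT : Admissible T) (χ : M →L[ℂ] ℂ) (hχ : ‖χ‖ ≤ 1) :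
    Admissible (χ.toLinearMap.comp T) := by
  have h := norm_apply_le_of_norm_le_one hχ
  refine ⟨fun x => (h _).trans (hT.1 x), fun i => ⟨fun b => (h _).trans ((hT.2 i).1 b),
    fun a => ?_⟩⟩
  change ‖χ _ - χ _‖ ≤ _
  rw [← map_sub]
  exact (h _).trans ((hT.2 i).2 a)

/-- For a single problem `i`, a functional on `B` of norm at most one is the `B`-component of an
admissible functional: scaled by `1 - δ`, it becomes a contraction on `u(S) ≤ X`, which extends
to `X` by Hahn–Banach. -/
lemma ExtProblem.exists_solves_of_functional (i : ExtProblem X) (ψ : i.B.Carrier →L[ℂ] ℂ)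
    (hψ : ‖ψ‖ ≤ 1) : ∃ s : X →L[ℂ] ℂ, ‖s‖ ≤ 1 ∧ i.Solves s ψ := by
  have hδ := i.pos
  have hδ1 := i.lt_one
  have hψ' := norm_apply_le_of_norm_le_one hψ
  obtain ⟨w, hw, hwu⟩ := exists_contraction_lift i.u.toLinearMap.rangeRestrict
    i.u.toLinearMap.surjective_rangeRestrict.denseRange
    (((1 - i.δ : ℝ) : ℂ) • ψ.toLinearMap.comp i.S.subtype) (fun a => by
      change ‖((1 - i.δ : ℝ) : ℂ) • ψ a‖ ≤ ‖i.u a‖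
      rw [norm_smul, Complex.norm_real, Real.norm_of_nonneg (by linarith)]
      exact (mul_le_mul_of_nonneg_left (hψ' a) (by linarith)).trans (i.le_norm a))
  obtain ⟨s, hs, hsw⟩ := exists_extension_le_one _ w hw
  refine ⟨s, hs, hψ', fun a => ?_⟩
  have h1 : s (i.u a) = ((1 - i.δ : ℝ) : ℂ) * ψ a :=
    (hsw (i.u.toLinearMap.rangeRestrict a)).trans (hwu a)
  have h2 : ψ a - s (i.u a) = (i.δ : ℂ) * ψ a := by rw [h1]; push_cast; ring
  rw [h2, norm_mul, Complex.norm_real, Real.norm_of_nonneg hδ.le]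
  have h3 : ‖ψ a‖ ≤ ‖a‖ := hψ' a
  nlinarith [norm_nonneg (ψ a), norm_nonneg a]

/-- Every space `X` embeds isometrically into a space `Y` in which all extension problems over `X`
have isometric approximate solutions, and to which contractions from `X` into approximately
injective complete spaces extend. -/
lemma exists_glue (X : Type u) [NormedAddCommGroup X] [NormedSpace ℂ X] :
    ∃ (Y : Type u) (_ : NormedAddCommGroup Y) (_ : NormedSpace ℂ Y) (ι : X →ₗᵢ[ℂ] Y),
      (∀ (M : Type u) [NormedAddCommGroup M] [NormedSpace ℂ M] [CompleteSpace M],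
        ApproxInjective M → ∀ s : X →L[ℂ] M, ‖s‖ ≤ 1 →
          ∃ s' : Y →L[ℂ] M, ‖s'‖ ≤ 1 ∧ ∀ x, s' (ι x) = s x) ∧
      ∀ (B : Type) [NormedAddCommGroup B] [NormedSpace ℂ B] [FiniteDimensional ℂ B]
        (S : Submodule ℂ B) (u : S →L[ℂ] X) (δ : ℝ), 0 < δ → δ < 1 →
        (∀ a, (1 - δ) * ‖a‖ ≤ ‖u a‖) → (∀ a, ‖u a‖ ≤ (1 + δ) * ‖a‖) →
        ∃ g : B →ₗᵢ[ℂ] Y, ∀ a : S, ‖g a - ι (u a)‖ ≤ 2 * δ * ‖a‖ := by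
  classical
  obtain ⟨Y, _, _, q, hqs, hq1, hq2⟩ :=
    exists_quotient_of_functionals {φ : GlueSum X →ₗ[ℂ] ℂ | Admissible φ} Admissible.bounded
  have hx : ∀ x, ‖q (x, 0)‖ = ‖x‖ := by
    intro x
    refine le_antisymm (hq2 _ _ (norm_nonneg _) fun φ hφ => hφ.1 x) ?_
    obtain ⟨χ, hχ1, hχ⟩ := exists_dual_vector'' ℂ x
    choose t ht using fun i : ExtProblem X => i.exists_solves approxInjective_complex χ hχ1
    obtain ⟨T, hT, hTx, -⟩ := exists_admissible χ hχ1 t ht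
    simpa [hTx, hχ] using hq1 T hT (x, 0)
  have hb : ∀ (i : ExtProblem X) (b : i.B.Carrier), ‖q (0, DFinsupp.single i b)‖ = ‖b‖ := by
    intro i b
    refine le_antisymm (hq2 _ _ (norm_nonneg _) fun φ hφ => (hφ.2 i).1 b) ?_
    obtain ⟨ψ, hψ1, hψ⟩ := exists_dual_vector'' ℂ b
    obtain ⟨s, hs, hsψ⟩ := i.exists_solves_of_functional ψ hψ1
    choose t ht using fun i : ExtProblem X => i.exists_solves approxInjective_complex s hs
    have hu : ∀ k : ExtProblem X, k.Solves s (Function.update t i ψ k) := fun k => by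
      rcases eq_or_ne k i with rfl | hk
      · simpa using hsψ
      · simpa [Function.update_of_ne hk] using ht k
    obtain ⟨T, hT, -, hTb⟩ := exists_admissible s hs (Function.update t i ψ) hu
    simpa [hTb, hψ] using hq1 T hT (0, DFinsupp.single i b)
  let ι : X →ₗᵢ[ℂ] Y := ⟨q.comp (LinearMap.inl ℂ X _), hx⟩
  have hι : ∀ x, ι x = q (x, 0) := fun x => rfl
  refine ⟨Y, inferInstance, inferInstance, ι, ?_, ?_⟩
  · intro M _ _ _ hM s hs
    choose t ht using fun i : ExtProblem X => i.exists_solves hM s hs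
    obtain ⟨T, hT, hTx, -⟩ := exists_admissible s hs t ht
    obtain ⟨s', hs', hsT⟩ := exists_contraction_lift q hqs.denseRange T fun v => by
      obtain ⟨χ, hχ1, hχ⟩ := exists_dual_vector'' ℂ (T v)
      simpa [hχ] using hq1 _ (hT.comp χ hχ1) v
    exact ⟨s', hs', fun x => by rw [hι, hsT, hTx]⟩
  · intro B _ _ _ S u δ h0 h1 hu1 hu2
    obtain ⟨P, e, he⟩ := FDNorm.exists_isometry B
    -- The problem `(B, S, u)` transported along the isometry `e` to a space of the index type.
    let S' : Submodule ℂ P.Carrier := S.map e.toLinearMap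
    let eS : S ≃ₗ[ℂ] S' := e.submoduleMap S
    have heS : ∀ a, ‖eS a‖ = ‖a‖ := fun a => he a
    have heS' : ∀ a, ‖eS.symm a‖ = ‖a‖ := fun a => by rw [← heS, eS.apply_symm_apply]
    let i : ExtProblem X :=
      { B := P, S := S', δ := δ, pos := h0, lt_one := h1
        u := u.comp (eS.symm.toLinearMap.mkContinuous 1 fun a => by
          rw [one_mul]; exact (heS' a).le)
        le_norm := fun a => by rw [← heS' a]; exact hu1 _
        norm_le := fun a => by rw [← heS' a]; exact hu2 _ }
    refine ⟨⟨(q.comp (LinearMap.inr ℂ X _)).comp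
      ((DFinsupp.lsingle (M := fun k : ExtProblem X => k.B.Carrier) i).comp e.toLinearMap),
      fun b => (hb i _).trans (he b)⟩, fun a => ?_⟩
    have hiu : i.u (eS a) = u a := congrArg u (eS.symm_apply_apply a)
    change ‖q (0, DFinsupp.single i (e a)) - q (u a, 0)‖ ≤ _
    rw [← map_sub]
    refine hq2 _ _ (by positivity) fun φ hφ => ?_
    have := (hφ.2 i).2 (eS a)
    rw [hiu] at this
    rw [map_sub, ← heS a]
    exact this

end Glue

/-! ### Direct limits of sequences of isometries -/

lemma exists_eventually_eq_of_succ_eq {α : Type*} {a : ℕ → α}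
    (h : ∀ᶠ n in Filter.atTop, a (n + 1) = a n) : ∃ c, ∀ᶠ n in Filter.atTop, a n = c := by
  obtain ⟨N, hN⟩ := Filter.eventually_atTop.1 h
  refine ⟨a N, Filter.eventually_atTop.2 ⟨N, fun n hn => ?_⟩⟩
  induction n, hn using Nat.le_induction with
  | base => rfl
  | succ m hm ih => rw [hN m hm, ih]

section Limit

variable {X : ℕ → Type u} [∀ n, NormedAddCommGroup (X n)] [∀ n, NormedSpace ℂ (X n)]

/-- The composite `X n → X (n + 1) → ⋯ → X m` of the bonding maps. -/
def transition (ι : ∀ n, X n →ₗᵢ[ℂ] X (n + 1)) (n : ℕ) {m : ℕ} (h : n ≤ m) : X n →ₗᵢ[ℂ] X m :=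
  Nat.leRec (motive := fun m _ => X n →ₗᵢ[ℂ] X m) LinearIsometry.id
    (fun k _ f => (ι k).comp f) h

lemma transition_self (ι : ∀ n, X n →ₗᵢ[ℂ] X (n + 1)) (n : ℕ) (x : X n) :
    transition ι n le_rfl x = x := by
  rw [transition, Nat.leRec_self]; rfl

lemma transition_succ (ι : ∀ n, X n →ₗᵢ[ℂ] X (n + 1)) (n : ℕ) {m : ℕ} (h : n ≤ m) (x : X n) :
    transition ι n (Nat.le_succ_of_le h) x = ι m (transition ι n h x) := by
  rw [transition, Nat.leRec_succ _ _ h]; rfl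

lemma transition_eq (ι : ∀ n, X n →ₗᵢ[ℂ] X (n + 1)) (v : ∀ n, X n) {n : ℕ}
    (hv : ∀ m, n ≤ m → v (m + 1) = ι m (v m)) {m : ℕ} (h : n ≤ m) :
    transition ι n h (v n) = v m := by
  induction m, h using Nat.le_induction with
  | base => exact transition_self ι n _
  | succ m hm ih => rw [transition_succ ι n hm, ih, hv m hm]

lemma transition_bond (ι : ∀ n, X n →ₗᵢ[ℂ] X (n + 1)) {n m : ℕ} (h : n + 1 ≤ m) (x : X n) :
    transition ι (n + 1) h (ι n x) = transition ι n (n.le_succ.trans h) x := by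
  induction m, h using Nat.le_induction with
  | base => rw [transition_self, transition_succ ι n le_rfl, transition_self]
  | succ m hm ih => rw [transition_succ ι _ hm, ih, transition_succ ι n (n.le_succ.trans hm)]

/-- Sequences that are eventually coherent for the bonding maps. Modulo the sequences that are
eventually zero, they form the algebraic direct limit. -/
def coherent (ι : ∀ n, X n →ₗᵢ[ℂ] X (n + 1)) : Submodule ℂ (∀ n, X n) where
  carrier := {v | ∀ᶠ n in Filter.atTop, v (n + 1) = ι n (v n)}
  zero_mem' := by simp
  add_mem' := by
    intro v w hv hw
    filter_upwards [hv, hw] with n h1 h2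
    simp [h1, h2]
  smul_mem' := by
    intro c v hv
    filter_upwards [hv] with n h1
    simp [h1]

open scoped Classical in
/-- The coherent sequence that starts with `x` at index `n`, and vanishes before `n`. -/
noncomputable def coherentOf (ι : ∀ n, X n →ₗᵢ[ℂ] X (n + 1)) (n : ℕ) : X n →ₗ[ℂ] coherent ι where
  toFun x := ⟨fun m => if h : n ≤ m then transition ι n h x else 0,
    Filter.eventually_atTop.2 ⟨n, fun m hm => by
      beta_reduce
      rw [dif_pos hm, dif_pos (Nat.le_succ_of_le hm), transition_succ]⟩⟩
  map_add' x y := by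
    ext m
    by_cases h : n ≤ m <;> simp [h]
  map_smul' c x := by
    ext m
    by_cases h : n ≤ m <;> simp [h]

lemma coherentOf_apply (ι : ∀ n, X n →ₗᵢ[ℂ] X (n + 1)) {n m : ℕ} (h : n ≤ m) (x : X n) :
    (coherentOf ι n x).1 m = transition ι n h x :=
  dif_pos h

/-- The completed direct limit `L` of a sequence of isometries, with its canonical maps. The space
is the completion of the coherent sequences `v` with the seminorm `lim ‖v n‖`. -/
lemma exists_limit (ι : ∀ n, X n →ₗᵢ[ℂ] X (n + 1)) :
    ∃ (L : Type u) (_ : NormedAddCommGroup L) (_ : NormedSpace ℂ L) (_ : CompleteSpace L)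
      (T : ∀ n, X n →ₗᵢ[ℂ] L),
      (∀ n x, T (n + 1) (ι n x) = T n x) ∧
      (∀ (y : L) (ε : ℝ), 0 < ε → ∃ n x, ‖T n x - y‖ ≤ ε) ∧
      ∀ (M : Type u) [NormedAddCommGroup M] [NormedSpace ℂ M] [CompleteSpace M]
        (s : ∀ n, X n →L[ℂ] M), (∀ n, ‖s n‖ ≤ 1) → (∀ n x, s (n + 1) (ι n x) = s n x) →
          ∃ σ : L →L[ℂ] M, ‖σ‖ ≤ 1 ∧ ∀ n x, σ (T n x) = s n x := by
  have hp0 : ∀ v : coherent ι, ∃ c : ℝ, ∀ᶠ n in Filter.atTop, ‖v.1 n‖ = c := fun v =>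
    exists_eventually_eq_of_succ_eq (by
      filter_upwards [v.2] with n hn
      rw [hn, (ι n).norm_map])
  choose p₀ hp₀ using hp0
  let p : Seminorm ℂ (coherent ι) := Seminorm.of p₀
    (fun v w => by
      obtain ⟨n, h1, h2, h3⟩ := ((hp₀ v).and ((hp₀ w).and (hp₀ (v + w)))).exists
      rw [← h1, ← h2, ← h3]
      exact norm_add_le _ _)
    (fun c v => by
      obtain ⟨n, h1, h2⟩ := ((hp₀ v).and (hp₀ (c • v))).exists
      rw [← h1, ← h2]
      exact norm_smul _ _)
  have hp : ∀ v, ∀ᶠ n in Filter.atTop, ‖v.1 n‖ = p v := hp₀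
  obtain ⟨Y, _, _, q, hqs, hq⟩ := exists_quotient_of_seminorm p
  have hq_eq : ∀ v w : coherent ι, (∀ᶠ n in Filter.atTop, v.1 n = w.1 n) → q v = q w := by
    intro v w h
    rw [← sub_eq_zero, ← map_sub, ← norm_eq_zero, hq]
    obtain ⟨n, h1, h2⟩ := (h.and (hp (v - w))).exists
    rw [← h2]
    simp [h1]
  let j : Y →ₗᵢ[ℂ] UniformSpace.Completion Y := UniformSpace.Completion.toComplₗᵢ
  have hjd : DenseRange j := UniformSpace.Completion.denseRange_coe
  let Q : coherent ι →ₗ[ℂ] UniformSpace.Completion Y := j.toLinearMap.comp q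
  have hQ : ∀ v, Q v = j (q v) := fun v => rfl
  have hQd : DenseRange Q := hjd.comp hqs.denseRange j.continuous
  have hQn : ∀ v, ‖Q v‖ = p v := fun v => by rw [hQ, j.norm_map, hq]
  let T : ∀ n, X n →ₗᵢ[ℂ] UniformSpace.Completion Y := fun n =>
    ⟨Q.comp (coherentOf ι n), fun x => by
      obtain ⟨m, h1, h2⟩ := ((hp (coherentOf ι n x)).and (Filter.eventually_ge_atTop n)).exists
      change ‖Q _‖ = _
      rw [hQn, ← h1, coherentOf_apply ι h2, LinearIsometry.norm_map]⟩
  have hT : ∀ n x, T n x = Q (coherentOf ι n x) := fun n x => rfl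
  refine ⟨UniformSpace.Completion Y, inferInstance, inferInstance, inferInstance, T, ?_, ?_, ?_⟩
  · intro n x
    rw [hT, hT, hQ, hQ]
    congr 1
    refine hq_eq _ _ (Filter.eventually_atTop.2 ⟨n + 1, fun m hm => ?_⟩)
    rw [coherentOf_apply ι hm, coherentOf_apply ι (n.le_succ.trans hm), transition_bond]
  · intro y ε hε
    obtain ⟨v, hv⟩ := Metric.denseRange_iff.1 hQd y ε hε
    obtain ⟨N, hN⟩ := Filter.eventually_atTop.1 v.2
    refine ⟨N, v.1 N, ?_⟩
    have : T N (v.1 N) = Q v := by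
      rw [hT, hQ, hQ]
      congr 1
      refine hq_eq _ _ (Filter.eventually_atTop.2 ⟨N, fun m hm => ?_⟩)
      rw [coherentOf_apply ι hm, transition_eq ι v.1 hN hm]
    rw [this, norm_sub_rev, ← dist_eq_norm]
    exact hv.le
  · intro M _ _ _ s hs hsι
    have hσ0 : ∀ v : coherent ι, ∃ c : M, ∀ᶠ n in Filter.atTop, s n (v.1 n) = c := fun v =>
      exists_eventually_eq_of_succ_eq (by
        filter_upwards [v.2] with n hn
        rw [hn, hsι])
    choose σ₀ hσ₀ using hσ0
    let σ₁ : coherent ι →ₗ[ℂ] M :=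
      { toFun := σ₀
        map_add' := fun v w => by
          obtain ⟨n, h1, h2, h3⟩ := ((hσ₀ v).and ((hσ₀ w).and (hσ₀ (v + w)))).exists
          rw [← h1, ← h2, ← h3]
          exact map_add (s n) _ _
        map_smul' := fun c v => by
          obtain ⟨n, h1, h2⟩ := ((hσ₀ v).and (hσ₀ (c • v))).exists
          rw [← h1, ← h2]
          exact map_smul (s n) _ _ }
    have hσ₁ : ∀ v, ∀ᶠ n in Filter.atTop, s n (v.1 n) = σ₁ v := hσ₀
    obtain ⟨σ, hσ, hσQ⟩ := exists_contraction_lift Q hQd σ₁ fun v => by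
      obtain ⟨n, h1, h2⟩ := ((hσ₁ v).and (hp v)).exists
      rw [hQn, ← h1, ← h2]
      exact norm_apply_le_of_norm_le_one (hs n) _
    refine ⟨σ, hσ, fun n x => ?_⟩
    rw [hT, hσQ]
    obtain ⟨m, h1, hm⟩ := ((hσ₁ (coherentOf ι n x)).and (Filter.eventually_ge_atTop n)).exists
    rw [← h1, coherentOf_apply ι hm]
    clear h1
    induction m, hm using Nat.le_induction with
    | base => rw [transition_self]
    | succ m hm ih => rw [transition_succ ι n hm, hsι, ih]

/-- An operator from a finite-dimensional space into a space exhausted, up to closure, by an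
increasing sequence of isometric images `T n (X n)` is approximated in norm by operators into a
single `X n`. -/
lemma exists_approx_factor {L : Type u} [NormedAddCommGroup L] [NormedSpace ℂ L]
    (ι : ∀ n, X n →ₗᵢ[ℂ] X (n + 1)) (T : ∀ n, X n →ₗᵢ[ℂ] L)
    (hT : ∀ n x, T (n + 1) (ι n x) = T n x)
    (hd : ∀ (y : L) (ε : ℝ), 0 < ε → ∃ (n : ℕ) (x : X n), ‖T n x - y‖ ≤ ε)
    {A : Type*} [NormedAddCommGroup A] [NormedSpace ℂ A] [FiniteDimensional ℂ A]
    (u : A →L[ℂ] L) {δ : ℝ} (hδ : 0 < δ) :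
    ∃ (n : ℕ) (w : A →L[ℂ] X n), ∀ a, ‖T n (w a) - u a‖ ≤ δ * ‖a‖ := by
  let b := Module.finBasis ℂ A
  let c := fun k => LinearMap.toContinuousLinearMap (b.coord k)
  let C : ℝ := ∑ k, ‖c k‖
  have hC : 0 ≤ C := Finset.sum_nonneg fun k _ => norm_nonneg _
  have hη : 0 < δ / (C + 1) := by positivity
  choose N x hx using fun k => hd (u (b k)) _ hη
  let n := Finset.univ.sup N
  have hmono : ∀ k, ∃ x' : X n, T n x' = T (N k) (x k) := by
    intro k
    have hk : N k ≤ n := Finset.le_sup (Finset.mem_univ k)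
    refine ⟨transition ι _ hk (x k), ?_⟩
    generalize n = m at hk
    induction m, hk using Nat.le_induction with
    | base => rw [transition_self]
    | succ m hm ih => rw [transition_succ ι _ hm, hT, ih]
  choose x' hx' using hmono
  refine ⟨n, ∑ k, (c k).smulRight (x' k), fun a => ?_⟩
  have e : T n ((∑ k, (c k).smulRight (x' k)) a) - u a
      = ∑ k, c k a • (T (N k) (x k) - u (b k)) := by
    conv_lhs => rw [← b.sum_repr a, map_sum u]
    simp only [b.sum_repr, sum_apply, ContinuousLinearMap.smulRight_apply,
      map_sum, LinearIsometry.map_smul, ContinuousLinearMap.map_smul, hx', smul_sub,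
      Finset.sum_sub_distrib]
    rfl
  rw [e]
  calc ‖∑ k, c k a • (T (N k) (x k) - u (b k))‖
      ≤ ∑ k, ‖c k‖ * ‖a‖ * (δ / (C + 1)) := norm_sum_le_of_le _ fun k _ => by
        rw [norm_smul]
        exact mul_le_mul ((c k).le_opNorm a) (hx k) (norm_nonneg _) (by positivity)
    _ = C * (δ / (C + 1)) * ‖a‖ := by
        rw [← Finset.sum_mul, ← Finset.sum_mul]; ring
    _ ≤ δ * ‖a‖ := by
        refine mul_le_mul_of_nonneg_right ?_ (norm_nonneg _)
        rw [mul_div_assoc', div_le_iff₀ (by positivity)]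
        nlinarith

end Limit

/-! ### Embedding into a Gurarii space -/

/-- A bundled complex normed space. -/
structure NormedStage where
  /-- The underlying type. -/
  X : Type u
  [grp : NormedAddCommGroup X]
  [spc : NormedSpace ℂ X]

attribute [instance] NormedStage.grp NormedStage.spc

/-- The sequence `S, next S, next (next S), …`. -/
def tower (next : NormedStage.{u} → NormedStage.{u}) (S : NormedStage.{u}) : ℕ → NormedStage.{u}
  | 0 => S
  | n + 1 => next (tower next S n)

/-- Iterating the gluing construction `ω` times, every normed space embeds isometrically into a
Gurarii space to which contractions into approximately injective complete spaces extend. -/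
lemma exists_gurarii_extension (K : Type u) [NormedAddCommGroup K] [NormedSpace ℂ K] :
    ∃ (L : Type u) (_ : NormedAddCommGroup L) (_ : NormedSpace ℂ L) (_ : CompleteSpace L)
      (f : K →ₗᵢ[ℂ] L), IsGurarii L ∧
      ∀ (M : Type u) [NormedAddCommGroup M] [NormedSpace ℂ M] [CompleteSpace M],
        ApproxInjective M → ∀ s : K →L[ℂ] M, ‖s‖ ≤ 1 →
          ∃ s' : L →L[ℂ] M, ‖s'‖ ≤ 1 ∧ ∀ x, s' (f x) = s x := by
  have step : ∀ S : NormedStage.{u}, ∃ (S' : NormedStage.{u}) (ι : S.X →ₗᵢ[ℂ] S'.X),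
      (∀ (M : Type u) [NormedAddCommGroup M] [NormedSpace ℂ M] [CompleteSpace M],
        ApproxInjective M → ∀ s : S.X →L[ℂ] M, ‖s‖ ≤ 1 →
          ∃ s' : S'.X →L[ℂ] M, ‖s'‖ ≤ 1 ∧ ∀ x, s' (ι x) = s x) ∧
      ∀ (B : Type) [NormedAddCommGroup B] [NormedSpace ℂ B] [FiniteDimensional ℂ B]
        (S₀ : Submodule ℂ B) (u : S₀ →L[ℂ] S.X) (δ : ℝ), 0 < δ → δ < 1 →
        (∀ a, (1 - δ) * ‖a‖ ≤ ‖u a‖) → (∀ a, ‖u a‖ ≤ (1 + δ) * ‖a‖) →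
        ∃ g : B →ₗᵢ[ℂ] S'.X, ∀ a : S₀, ‖g a - ι (u a)‖ ≤ 2 * δ * ‖a‖ := fun S => by
    obtain ⟨Y, i1, i2, h⟩ := exists_glue S.X
    exact ⟨⟨Y⟩, h⟩
  choose next bond hext hsol using step
  let stage : ℕ → NormedStage.{u} := tower next ⟨K⟩
  let ι : ∀ n, (stage n).X →ₗᵢ[ℂ] (stage (n + 1)).X := fun n => bond (stage n)
  obtain ⟨L, _, _, _, T, hT, hd, hlim⟩ := exists_limit (X := fun n => (stage n).X) ι
  refine ⟨L, inferInstance, inferInstance, inferInstance, T 0, ?_, ?_⟩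
  · intro A B _ _ _ _ _ _ h hh u hu ε hε
    let δ := min (ε / 3) (1 / 2)
    have hδ : 0 < δ := by positivity
    have hδ1 : δ < 1 := (min_le_right _ _).trans_lt (by norm_num)
    have hδε : 3 * δ ≤ ε := by have := min_le_left (ε / 3) (1 / 2); grind
    obtain ⟨u', -, hu'⟩ := exists_contraction_lift h.toLinearMap.rangeRestrict
      h.toLinearMap.surjective_rangeRestrict.denseRange u.toLinearMap
      fun a => ((hu a).trans (hh a).symm).le
    have hu'n : ∀ y, ‖u' y‖ = ‖y‖ := by
      intro y
      obtain ⟨a, rfl⟩ := h.toLinearMap.surjective_rangeRestrict y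
      rw [hu']
      exact (hu a).trans (hh a).symm
    obtain ⟨n, w, hw⟩ := exists_approx_factor ι T hT hd u' hδ
    have hlow : ∀ y, (1 - δ) * ‖y‖ ≤ ‖w y‖ := fun y => by
      have h1 := norm_sub_norm_le (u' y) (T n (w y))
      have h2 := hw y
      rw [norm_sub_rev] at h2
      rw [hu'n, (T n).norm_map] at h1
      linarith
    have hup : ∀ y, ‖w y‖ ≤ (1 + δ) * ‖y‖ := fun y => by
      have h1 := norm_sub_norm_le (T n (w y)) (u' y)
      have h2 := hw y
      rw [hu'n, (T n).norm_map] at h1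
      linarith
    obtain ⟨g, hg⟩ := hsol (stage n) B _ w δ hδ hδ1 hlow hup
    let g' : B →ₗᵢ[ℂ] (stage (n + 1)).X := g
    refine ⟨((T (n + 1)).comp g').toContinuousLinearMap, fun b => ((T (n + 1)).comp g').norm_map b,
      ContinuousLinearMap.opNorm_le_bound _ hε.le fun a => ?_⟩
    let y := h.toLinearMap.rangeRestrict a
    have h1 : ‖T (n + 1) (g' (h a)) - T n (w y)‖ ≤ 2 * δ * ‖y‖ := by
      rw [← hT n, ← map_sub, LinearIsometry.norm_map]
      exact hg y
    have h2 : ‖T n (w y) - u a‖ ≤ δ * ‖y‖ := by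
      have := hw y
      rwa [show u' y = u a from hu' a] at this
    have h3 : ‖y‖ = ‖a‖ := hh a
    change ‖T (n + 1) (g' (h a)) - u a‖ ≤ ε * ‖a‖
    calc ‖T (n + 1) (g' (h a)) - u a‖
        ≤ ‖T (n + 1) (g' (h a)) - T n (w y)‖ + ‖T n (w y) - u a‖ :=
          norm_sub_le_norm_sub_add_norm_sub _ _ _
      _ ≤ 3 * δ * ‖a‖ := by rw [h3] at h1 h2; linarith
      _ ≤ ε * ‖a‖ := mul_le_mul_of_nonneg_right hδε (norm_nonneg _)
  · intro M _ _ _ hM s hs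
    choose e he1 he using fun (S : NormedStage.{u}) (t : {t : S.X →L[ℂ] M // ‖t‖ ≤ 1}) =>
      hext S M hM t.1 t.2
    let t : ∀ n, {t : (stage n).X →L[ℂ] M // ‖t‖ ≤ 1} := fun n =>
      Nat.rec (motive := fun n => {t : (stage n).X →L[ℂ] M // ‖t‖ ≤ 1}) ⟨s, hs⟩
        (fun n t => ⟨e (stage n) t, he1 (stage n) t⟩) n
    obtain ⟨σ, hσ, hσT⟩ := hlim M (fun n => (t n).1) (fun n => (t n).2)
      fun n x => he (stage n) (t n) x
    exact ⟨σ, hσ, fun x => hσT 0 x⟩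

/-- A Banach space `K` is a Lindenstrauss space if and only if there exist a Gurarii
space `L` and a morphism `f : K → L` that approximately splits, i.e. for every `ε > 0`
there is a morphism `s : L → K` with `‖s ∘ f - id‖ ≤ ε`. -/
theorem isLindenstrauss_iff_approxSplit_into_gurarii (K : Type u)
    [NormedAddCommGroup K] [NormedSpace ℂ K] [CompleteSpace K] :
    IsLindenstrauss K ↔
      ∃ (L : Type u) (_ : NormedAddCommGroup L) (_ : NormedSpace ℂ L) (_ : CompleteSpace L),
        IsGurarii L ∧
        ∃ f : K →L[ℂ] L, ‖f‖ ≤ 1 ∧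
          ∀ ε : ℝ, 0 < ε →
            ∃ s : L →L[ℂ] K, ‖s‖ ≤ 1 ∧ ‖s.comp f - ContinuousLinearMap.id ℂ K‖ ≤ ε := by
  constructor
  · intro hK
    obtain ⟨L, i1, i2, i3, f, hL, hext⟩ := exists_gurarii_extension K
    obtain ⟨s, hs, hsf⟩ := hext K hK.approxInjective (ContinuousLinearMap.id ℂ K)
      ContinuousLinearMap.norm_id_le
    have hsf' : s.comp f.toContinuousLinearMap - ContinuousLinearMap.id ℂ K = 0 :=
      sub_eq_zero.2 (ContinuousLinearMap.ext hsf)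
    exact ⟨L, i1, i2, i3, hL, f.toContinuousLinearMap, f.norm_toContinuousLinearMap_le,
      fun ε hε => ⟨s, hs, by rw [hsf', norm_zero]; exact hε.le⟩⟩
  · rintro ⟨L, _, _, _, hL, f, hf, hs⟩
    exact (hL.approxInjective.of_approxSplit f hf hs).isLindenstrauss
end

section
/- A morphism f : A → B of Banach spaces is an ε-isometry if and only if there exist a Banach space C, a morphism h : A → C that is a linear isometric embedding, and a morphism g : B → C such that ‖g ∘ f − h‖ ≤ ε. -/
/-!
If `h` is isometric and `g` is a contraction with `‖g ∘ f - h‖ ≤ ε`, then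
`‖x‖ = ‖h x‖ ≤ ‖g (f x)‖ + ε ‖x‖ ≤ ‖f x‖ + ε ‖x‖`, which is the nontrivial half of the
`ε`-isometry inequality.

Conversely, for an `ε`-isometry `f`, give `A × B` the largest seminorm that is at most `‖a‖` on
`(a, 0)`, at most `‖b‖` on `(0, b)` and at most `ε ‖x‖` on `(x, -f x)`:
`p (a, b) = inf_x (‖a - x‖ + ‖b + f x‖ + ε ‖x‖)`.
Homogeneity turns the `ε`-isometry condition into `‖x‖ ≤ ‖f x‖ + ε ‖x‖` for all `x`, so that
`p (a, 0) = ‖a‖`. The space `C` is the Hausdorff completion of `(A × B, p)`, and `h`, `g` are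
induced by the two inclusions.
-/

/-- A morphism `f : A → B` of Banach spaces is an *`ε`-isometry* if
`|‖f x‖ - ‖x‖| ≤ ε` for every `x` with `‖x‖ ≤ 1`. -/
def IsEpsIsometry {A B : Type*} [NormedAddCommGroup A] [NormedSpace ℂ A]
    [NormedAddCommGroup B] [NormedSpace ℂ B] (f : A →L[ℂ] B) (ε : ℝ) : Prop :=
  ∀ x : A, ‖x‖ ≤ 1 → |‖f x‖ - ‖x‖| ≤ ε

/-- The amalgamation seminorm `p (a, b) = inf_x (‖a - x‖ + ‖b + f x‖ + ε ‖x‖)` on `A × B`. -/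
noncomputable def amalgamSeminorm {A B : Type}
    [NormedAddCommGroup A] [NormedSpace ℂ A] [NormedAddCommGroup B] [NormedSpace ℂ B]
    (f : A →L[ℂ] B) (ε : ℝ) (hε : 0 ≤ ε) : Seminorm ℂ (A × B) :=
  have bdd : ∀ z : A × B, BddBelow (Set.range fun x : A =>
      ‖z.1 - x‖ + ‖z.2 + f x‖ + ε * ‖x‖) := fun z =>
    ⟨0, by rintro _ ⟨x, rfl⟩; positivity⟩
  Seminorm.ofSMulLE (fun z => ⨅ x : A, (‖z.1 - x‖ + ‖z.2 + f x‖ + ε * ‖x‖))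
    (le_antisymm ((ciInf_le (bdd 0) 0).trans (by simp))
      (le_ciInf fun x => by positivity))
    (fun z w => le_ciInf_add_ciInf fun x y => (ciInf_le (bdd (z + w)) (x + y)).trans (by
      have h1 : ‖(z + w).1 - (x + y)‖ ≤ ‖z.1 - x‖ + ‖w.1 - y‖ := by
        rw [Prod.fst_add, add_sub_add_comm]; exact norm_add_le _ _
      have h2 : ‖(z + w).2 + f (x + y)‖ ≤ ‖z.2 + f x‖ + ‖w.2 + f y‖ := by
        rw [Prod.snd_add, map_add, add_add_add_comm]; exact norm_add_le _ _
      have h3 := mul_le_mul_of_nonneg_left (norm_add_le x y) hε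
      linarith))
    (fun r z => by
      rw [Real.mul_iInf_of_nonneg (norm_nonneg r)]
      refine le_ciInf fun x => (ciInf_le (bdd (r • z)) (r • x)).trans (le_of_eq ?_)
      rw [Prod.smul_fst, Prod.smul_snd, map_smul, ← smul_sub, ← smul_add]
      simp only [norm_smul]
      ring)

lemma amalgamSeminorm_le {A B : Type}
    [NormedAddCommGroup A] [NormedSpace ℂ A] [NormedAddCommGroup B] [NormedSpace ℂ B]
    (f : A →L[ℂ] B) (ε : ℝ) (hε : 0 ≤ ε) (a x : A) (b : B) :
    amalgamSeminorm f ε hε (a, b) ≤ ‖a - x‖ + ‖b + f x‖ + ε * ‖x‖ :=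
  ciInf_le (f := fun x : A => ‖a - x‖ + ‖b + f x‖ + ε * ‖x‖)
    ⟨0, by rintro _ ⟨x, rfl⟩; positivity⟩ x

/-- Every seminormed space maps into its Hausdorff completion, preserving the seminorm. -/
lemma exists_banach_of_seminorm {E : Type} [AddCommGroup E] [Module ℂ E] (p : Seminorm ℂ E) :
    ∃ (C : Type) (_ : NormedAddCommGroup C) (_ : NormedSpace ℂ C) (_ : CompleteSpace C)
      (i : E →ₗ[ℂ] C), ∀ x, ‖i x‖ = p x := by
  let : SeminormedAddCommGroup E := p.toAddGroupSeminorm.toSeminormedAddCommGroup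
  let : NormedSpace ℂ E := ⟨fun r x => (map_smul_eq_mul p r x).le⟩
  exact ⟨UniformSpace.Completion E, inferInstance, inferInstance, inferInstance,
    (UniformSpace.Completion.toComplL (𝕜 := ℂ) (E := E)).toLinearMap,
    fun x => UniformSpace.Completion.norm_coe x⟩

lemma IsEpsIsometry.norm_le {A B : Type}
    [NormedAddCommGroup A] [NormedSpace ℂ A] [NormedAddCommGroup B] [NormedSpace ℂ B]
    {f : A →L[ℂ] B} {ε : ℝ} (h : IsEpsIsometry f ε) (x : A) :
    ‖x‖ ≤ ‖f x‖ + ε * ‖x‖ := by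
  rcases eq_or_ne x 0 with rfl | hx
  · simp
  have hx' : 0 < ‖x‖ := norm_pos_iff.mpr hx
  have hn : ‖((‖x‖⁻¹ : ℝ) : ℂ) • x‖ = 1 := by
    rw [norm_smul, Complex.norm_real, norm_inv, norm_norm, inv_mul_cancel₀ hx'.ne']
  have h1 := (abs_le.mp (h _ hn.le)).1
  rw [hn, map_smul, norm_smul, Complex.norm_real, norm_inv, norm_norm] at h1
  have h2 : ‖x‖⁻¹ * ‖f x‖ * ‖x‖ = ‖f x‖ := by field_simp
  nlinarith

/-- A morphism `f : A → B` of Banach spaces is an `ε`-isometry if and only if there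
exist a Banach space `C`, a linear isometric embedding `h : A → C` and a morphism
`g : B → C` such that `‖g ∘ f - h‖ ≤ ε`. -/
theorem isEpsIsometry_iff_exists_isometry {A B : Type}
    [NormedAddCommGroup A] [NormedSpace ℂ A] [CompleteSpace A]
    [NormedAddCommGroup B] [NormedSpace ℂ B] [CompleteSpace B]
    (f : A →L[ℂ] B) (hf : ‖f‖ ≤ 1) (ε : ℝ) :
    IsEpsIsometry f ε ↔
      ∃ (C : Type) (_ : NormedAddCommGroup C) (_ : NormedSpace ℂ C) (_ : CompleteSpace C)
        (h : A →L[ℂ] C) (g : B →L[ℂ] C),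
        (∀ x : A, ‖h x‖ = ‖x‖) ∧ ‖g‖ ≤ 1 ∧ ‖g.comp f - h‖ ≤ ε := by
  constructor
  · intro H
    have hε : 0 ≤ ε := (abs_nonneg _).trans (H 0 (by simp))
    obtain ⟨C, _, _, _, i, hi⟩ := exists_banach_of_seminorm (amalgamSeminorm f ε hε)
    have hA : ∀ a : A, ‖i (a, 0)‖ = ‖a‖ := fun a => by
      rw [hi]
      refine le_antisymm ((amalgamSeminorm_le f ε hε a 0 0).trans (by simp))
        (le_ciInf fun x => ?_)
      have h1 := H.norm_le x
      have h2 : ‖a‖ ≤ ‖a - x‖ + ‖x‖ := norm_le_norm_sub_add a x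
      simp only [zero_add]
      linarith
    have hB : ∀ b : B, ‖i (0, b)‖ ≤ 1 * ‖b‖ := fun b => by
      rw [hi]
      exact (amalgamSeminorm_le f ε hε 0 0 b).trans (by simp)
    refine ⟨C, inferInstance, inferInstance, inferInstance,
      (i ∘ₗ LinearMap.inl ℂ A B).mkContinuous 1 fun a => by simpa using (hA a).le,
      (i ∘ₗ LinearMap.inr ℂ A B).mkContinuous 1 hB, hA,
      LinearMap.mkContinuous_norm_le _ zero_le_one _, ?_⟩
    refine ContinuousLinearMap.opNorm_le_bound _ hε fun a => ?_
    change ‖i (0, f a) - i (a, 0)‖ ≤ ε * ‖a‖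
    rw [← map_sub, hi, Prod.mk_sub_mk, zero_sub, sub_zero]
    exact (amalgamSeminorm_le f ε hε (-a) (-a) (f a)).trans (by simp)
  · rintro ⟨C, _, _, _, h, g, hh, hg, hgf⟩ x hx
    have hε : 0 ≤ ε := (norm_nonneg _).trans hgf
    have h1 : ‖f x‖ ≤ ‖x‖ := by simpa using f.le_of_opNorm_le hf x
    have h2 : ‖g (f x)‖ ≤ ‖f x‖ := by simpa using g.le_of_opNorm_le hg (f x)
    have h3 : ‖g (f x) - h x‖ ≤ ε * ‖x‖ := (g.comp f - h).le_of_opNorm_le hgf x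
    have h4 : ‖h x‖ ≤ ‖g (f x)‖ + ‖g (f x) - h x‖ := norm_le_norm_add_norm_sub _ _
    rw [hh] at h4
    have h5 : ε * ‖x‖ ≤ ε := mul_le_of_le_one_right hε hx
    rw [abs_le]
    constructor <;> linarith
end
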